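/- Let d ∈ ℕ be a constant. There exist constants c, C, γ > 0 depending only on d such that for all sufficiently large n the following holds: for any regular graph G on n vertices, any d matchings M^{(1)},…,M^{(d)} applied periodically (balancing circuit model) whose round matrix M = ∏_{s=1}^{d} M^{(s)} satisfies λ(M) < 1, and any initial load vector x^{(0)} ∈ ℤ^n with discrepancy at most K (K ≥ 2), the discrete process with independent uniformly random orientations satisfies: with probability at least 1 − e^{−(log n)^{γ}}, the discrepancy of x^{(t)} is at most c after t = ⌈C·log(Kn)/(1 − λ(M))⌉ rounds. -/

import Mathlib

namespace LB


/-- A matching on the vertex set `Fin n`, encoded as an involution;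
`f u = u` means that `u` is unmatched, and `f u = v ≠ u` means `{u,v}`
is an edge of the matching. -/
structure Matching (n : ℕ) where
  f : Fin n → Fin n
  invol : ∀ u, f (f u) = u

/-- The matching matrix of a matching: entries `1/2` at `(u,u)`, `(u,v)`, `(v,u)`, `(v,v)`
for matched pairs `{u,v}`, entry `1` at `(w,w)` for unmatched `w`, and `0` otherwise. -/
noncomputable def Matching.matrix {n : ℕ} (m : Matching n) : Matrix (Fin n) (Fin n) ℝ :=
  Matrix.of fun u v =>
    if m.f u = u then (if v = u then 1 else 0)
    else if v = u ∨ v = m.f u then (1 : ℝ) / 2 else 0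

/-- `M^{[t₁,t₂]} = M^{(t₁)} * ⋯ * M^{(t₂)}` (the identity matrix if `t₁ > t₂`). -/
noncomputable def prodMatrix {n : ℕ} (M : ℕ → Matching n) (t₁ t₂ : ℕ) : Matrix (Fin n) (Fin n) ℝ :=
  ((List.range' t₁ (t₂ + 1 - t₁)).map fun s => (M s).matrix).prod

/-- Sum of `g u v` over the matched pairs `[u:v]` (i.e. `{u,v}` in the matching with `u < v`). -/
noncomputable def pairSum {n : ℕ} (m : Matching n) (g : Fin n → Fin n → ℝ) : ℝ :=
  ∑ u : Fin n, if u < m.f u then g u (m.f u) else 0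

/-- The discrepancy `max_{u,v} |x_u - x_v|` of a load vector. -/
noncomputable def disc {n : ℕ} (x : Fin n → ℝ) : ℝ :=
  ⨆ u : Fin n, ⨆ v : Fin n, |x u - x v|

/-- Discrepancy of an integer load vector. -/
noncomputable def discZ {n : ℕ} (x : Fin n → ℤ) : ℝ := disc fun u => (x u : ℝ)

/-- The time interval `[t₁,t₂]` (with its matchings) is `(K,ε)`-smoothing. -/
def IsSmoothing {n : ℕ} (M : ℕ → Matching n) (t₁ t₂ : ℕ) (K ε : ℝ) : Prop :=
  ∀ ξ : Fin n → ℝ, disc ξ ≤ K → disc (Matrix.vecMul ξ (prodMatrix M (t₁ + 1) t₂)) ≤ ε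

/-- `τ_cont(K,ε)`: the minimum `t` such that `[0,t]` is `(K,ε)`-smoothing. -/
noncomputable def tauCont {n : ℕ} (M : ℕ → Matching n) (K ε : ℝ) : ℕ :=
  sInf {t : ℕ | IsSmoothing M 0 t K ε}

/-- One round of the discrete process: two matched nodes split their total load,
the node indicated by the orientation bit (stored at the pair `(min,max)`) receiving
the excess token; `φ u v = true` for `u < v` means the excess token goes to `u`. -/
def step {n : ℕ} (m : Matching n) (φ : Fin n → Fin n → Bool) (x : Fin n → ℤ) :
    Fin n → ℤ := fun u =>
  if m.f u = u then x u
  else if u < m.f u then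
    (if φ u (m.f u) then Int.ediv (x u + x (m.f u) + 1) 2
     else Int.ediv (x u + x (m.f u)) 2)
  else
    (if φ (m.f u) u then Int.ediv (x u + x (m.f u)) 2
     else Int.ediv (x u + x (m.f u) + 1) 2)

/-- The discrete process started at round `t₁` from load vector `x`:
`loadsFrom M t₁ Φ x r` is the load vector `r` rounds later; the `(r+1)`-st
step uses the matching `M (t₁+r+1)` and the orientations `Φ (r+1)`. -/
def loadsFrom {n : ℕ} (M : ℕ → Matching n) (t₁ : ℕ) (Φ : ℕ → Fin n → Fin n → Bool)
    (x : Fin n → ℤ) : ℕ → Fin n → ℤ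
  | 0 => x
  | r + 1 => step (M (t₁ + r + 1)) (Φ (r + 1)) (loadsFrom M t₁ Φ x r)

/-- The discrete process started at round `0`; round `t ≥ 1` uses matching `M t`. -/
def loads {n : ℕ} (M : ℕ → Matching n) (Φ : ℕ → Fin n → Fin n → Bool)
    (x : Fin n → ℤ) : ℕ → Fin n → ℤ := loadsFrom M 0 Φ x

/-- Extend a finite family of random choices (one for each of the rounds `1,…,T`)
to all rounds: round `s` reads index `s-1`. -/
def lift {A : Type*} (a₀ : A) {T : ℕ} (ω : Fin T → A) : ℕ → A := fun s =>
  if h : s - 1 < T then ω ⟨s - 1, h⟩ else a₀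

/-- Default (irrelevant) orientation. -/
def orientDefault (n : ℕ) : Fin n → Fin n → Bool := fun _ _ => true

/-- Probability of an event under the uniform distribution on a finite sample space;
this makes all the per-round random choices independent and uniform. -/
noncomputable def pr {Ω : Type*} [Fintype Ω] (A : Ω → Prop) : ℝ :=
  haveI := Classical.decPred A
  ((Finset.univ.filter A).card : ℝ) / (Fintype.card Ω : ℝ)

/-- Expectation under the uniform distribution on a finite sample space. -/
noncomputable def ex {Ω : Type*} [Fintype Ω] (Z : Ω → ℝ) : ℝ :=
  (∑ ω : Ω, Z ω) / (Fintype.card Ω : ℝ)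

/-- `λ(M) = max{|λ₂(M)|, |λ_n(M)|}` for a symmetric doubly stochastic matrix `M`,
characterized as the operator norm of `M` on the subspace orthogonal to `𝟙`. -/
noncomputable def lamMax {n : ℕ} (M : Matrix (Fin n) (Fin n) ℝ) : ℝ :=
  ⨆ x : {x : Fin n → ℝ // (∑ u, x u) = 0 ∧ (∑ u, (x u) ^ 2) = 1},
    Real.sqrt (∑ u, (M.mulVec x.1 u) ^ 2)

/-- The round matrix `M = M^{(1)} ⋯ M^{(d)}` of the balancing circuit. -/
noncomputable def roundMatrix {n d : ℕ} (Ms : Fin d → Matching n) : Matrix (Fin n) (Fin n) ℝ :=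
  (List.ofFn fun i => (Ms i).matrix).prod

/-- The periodic sequence of matchings of the balancing circuit:
round `t` uses `M^{(((t-1) mod d)+1)}`. -/
def circuit {n d : ℕ} (hd : 0 < d) (Ms : Fin d → Matching n) : ℕ → Matching n :=
  fun t => Ms ⟨(t - 1) % d, Nat.mod_lt _ hd⟩


noncomputable def mv {n : ℕ} (m : Matching n) (q : Fin n → ℝ) : Fin n → ℝ :=
  fun u => (q u + q (m.f u)) / 2

noncomputable def Bv {n : ℕ} : List (Matching n) → (Fin n → ℝ) → (Fin n → ℝ)
  | [], q => q
  | m :: l, q => mv m (Bv l q)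

noncomputable def ev {n : ℕ} : List (Matching n) → (Fin n → ℝ) → (Fin n → ℝ)
  | [], Z => Z
  | m :: l, Z => ev l (mv m Z)

def dt {n : ℕ} (y z : Fin n → ℝ) : ℝ := ∑ u, y u * z u

def nsq {n : ℕ} (y : Fin n → ℝ) : ℝ := ∑ u, (y u) ^ 2

noncomputable def cx {n : ℕ} (x : Fin n → ℤ) : Fin n → ℝ :=
  fun u => (x u : ℝ) - (∑ v, (x v : ℝ)) / n

noncomputable def hh {n : ℕ} (x : Fin n → ℤ) : Fin n → ℝ := fun u => max (cx x u - 5) 0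

noncomputable def nz {n : ℕ} (m : Matching n) (φ : Fin n → Fin n → Bool) (x : Fin n → ℤ) :
    Fin n → ℝ := fun u => (step m φ x u : ℝ) - ((x u : ℝ) + x (m.f u)) / 2

noncomputable def Pm {n : ℕ} (m : Matching n) (f : (Fin n → ℤ) → ℝ) : (Fin n → ℤ) → ℝ :=
  fun x => ex fun φ : Fin n → Fin n → Bool => f (step m φ x)

noncomputable def Pl {n : ℕ} : List (Matching n) → ((Fin n → ℤ) → ℝ) → (Fin n → ℤ) → ℝ
  | [], f => f
  | m :: l, f => Pm m (Pl l f)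

noncomputable def tq {n : ℕ} (m : Matching n) (F : Fin n → (Fin n → ℤ) → ℝ) (u : Fin n)
    (x : Fin n → ℤ) : ℝ :=
  (hh x u * F u x + hh x (m.f u) * F (m.f u) x) / (hh x u + hh x (m.f u))

noncomputable def Lt {n : ℕ} (m : Matching n) (F : Fin n → (Fin n → ℤ) → ℝ) :
    Fin n → (Fin n → ℤ) → ℝ :=
  fun u x => ex fun φ : Fin n → Fin n → Bool => tq m F u (step m φ x)

noncomputable def Ll {n : ℕ} : List (Matching n) → (Fin n → (Fin n → ℤ) → ℝ) →
    Fin n → (Fin n → ℤ) → ℝ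
  | [], F => F
  | m :: l, F => Lt m (Ll l F)

noncomputable def Ft {n : ℕ} (β : ℝ) (q : Fin n → ℝ) : Fin n → (Fin n → ℤ) → ℝ :=
  fun u x => q u * Real.exp (β * (dt q (cx x) - q u) - β ^ 2 * nsq q)

section ex_lemmas
variable {Ω : Type*} [Fintype Ω]

lemma ex_mono {f g : Ω → ℝ} (h : ∀ ω, f ω ≤ g ω) : ex f ≤ ex g := by
  unfold ex
  exact div_le_div_of_nonneg_right (Finset.sum_le_sum fun i _ => h i) (by positivity)

lemma ex_add (f g : Ω → ℝ) : ex (fun ω => f ω + g ω) = ex f + ex g := by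
  unfold ex; rw [Finset.sum_add_distrib, add_div]

lemma ex_mul (c : ℝ) (f : Ω → ℝ) : ex (fun ω => c * f ω) = c * ex f := by
  unfold ex; rw [← Finset.mul_sum, mul_div_assoc]

lemma ex_sum {ι : Type*} (s : Finset ι) (f : ι → Ω → ℝ) :
    ex (fun ω => ∑ i ∈ s, f i ω) = ∑ i ∈ s, ex (f i) := by
  unfold ex; rw [Finset.sum_comm, Finset.sum_div]

lemma ex_const [Nonempty Ω] (c : ℝ) : ex (fun _ : Ω => c) = c := by
  unfold ex
  have : (Fintype.card Ω : ℝ) ≠ 0 := by exact_mod_cast Fintype.card_ne_zero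
  simp [this]

end ex_lemmas

lemma sum_inv {n : ℕ} (m : Matching n) (g : Fin n → ℝ) : ∑ u, g (m.f u) = ∑ u, g u :=
  Function.Bijective.sum_comp (Function.Involutive.bijective m.invol) g

/-- pairing a sum -/
lemma sum_pair {n : ℕ} (m : Matching n) (g : Fin n → ℝ) :
    ∑ u, g u = ∑ u, ((if u < m.f u then g u + g (m.f u) else 0) +
      (if m.f u = u then g u else 0)) := by
  have h1 : ∑ u, (if u < m.f u then g (m.f u) else 0) = ∑ u, (if m.f u < u then g u else 0) := by
    rw [← sum_inv m (fun u => if m.f u < u then g u else 0)]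
    simp only [m.invol]
  have h2 : ∀ u, ((if u < m.f u then g u + g (m.f u) else 0) +
      (if m.f u = u then g u else 0)) = (if u < m.f u then g u else 0) +
      (if u < m.f u then g (m.f u) else 0) + (if m.f u = u then g u else 0) := by
    intro u; split_ifs <;> simp
  simp only [h2, Finset.sum_add_distrib, h1]
  rw [← Finset.sum_add_distrib, ← Finset.sum_add_distrib]
  refine Finset.sum_congr rfl fun u _ => ?_
  rcases lt_trichotomy u (m.f u) with h | h | h
  · simp [h, h.ne', h.not_gt]
  · simp [← h]
  · simp [h, h.ne, h.not_gt]

lemma ex_prod {n : ℕ} (m : Matching n) (g : Fin n → Bool → ℝ) :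
    ex (fun φ : Fin n → Fin n → Bool => ∏ i, g i (φ i (m.f i))) =
      ∏ i, (g i true + g i false) / 2 := by
  have key : ∀ (i v : Fin n), ex (fun r : Fin n → Bool => g i (r v)) =
      (g i true + g i false) / 2 := by
    intro i v
    have hfl : ex (fun r : Fin n → Bool => g i (r v)) = ex (fun r : Fin n → Bool => g i (!(r v))) := by
      unfold ex
      congr 1
      let e : (Fin n → Bool) ≃ (Fin n → Bool) :=
        Equiv.piCongrRight fun _ => Equiv.boolNot
      rw [← e.sum_comp]
      rfl
    have : ex (fun r : Fin n → Bool => g i (r v)) + ex (fun r : Fin n → Bool => g i (!(r v)))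
        = g i true + g i false := by
      rw [← ex_add]
      rw [← ex_const (Ω := Fin n → Bool) (g i true + g i false)]
      congr 1; funext r
      cases r v <;> simp [add_comm]
    linarith
  rw [Finset.prod_congr rfl fun i _ => (key i (m.f i)).symm]
  unfold ex
  rw [Finset.prod_div_distrib, Finset.prod_univ_sum]
  simp [Fintype.piFinset_univ]



noncomputable def od {n : ℕ} (m : Matching n) (x : Fin n → ℤ) (i : Fin n) : ℝ :=
  if (x i + x (m.f i)) % 2 = 1 then 1 / 2 else 0

def sg (b : Bool) : ℝ := if b then 1 else -1

lemma sg_not (b : Bool) : sg (!b) = - sg b := by cases b <;> simp [sg]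

lemma od_nonneg {n : ℕ} (m : Matching n) (x : Fin n → ℤ) (i : Fin n) : 0 ≤ od m x i := by
  unfold od; split_ifs <;> norm_num

lemma od_le {n : ℕ} (m : Matching n) (x : Fin n → ℤ) (i : Fin n) : od m x i ≤ 1 / 2 := by
  unfold od; split_ifs <;> norm_num

lemma ediv_cast1 (s : ℤ) : ((Int.ediv (s + 1) 2 : ℤ) : ℝ) = (s : ℝ) / 2 + (if s % 2 = 1 then 1 / 2 else 0) := by
  have e : Int.ediv (s+1) 2 = (s+1)/2 := rfl
  rw [e]
  split_ifs with h
  · have : (s+1)/2*2 = s+1 := by omega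
    have : (((s+1)/2 : ℤ) : ℝ)*2 = s+1 := by exact_mod_cast this
    linarith
  · have : (s+1)/2*2 = s := by omega
    have : (((s+1)/2 : ℤ) : ℝ)*2 = s := by exact_mod_cast this
    linarith

lemma ediv_cast0 (s : ℤ) : ((Int.ediv s 2 : ℤ) : ℝ) = (s : ℝ) / 2 - (if s % 2 = 1 then 1 / 2 else 0) := by
  have e : Int.ediv s 2 = s/2 := rfl
  rw [e]
  split_ifs with h
  · have : s/2*2 = s-1 := by omega
    have : ((s/2 : ℤ) : ℝ)*2 = s-1 := by exact_mod_cast this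
    linarith
  · have : s/2*2 = s := by omega
    have : ((s/2 : ℤ) : ℝ)*2 = s := by exact_mod_cast this
    linarith

lemma nz_fix {n : ℕ} (m : Matching n) (φ) (x : Fin n → ℤ) (i : Fin n) (h : m.f i = i) :
    nz m φ x i = 0 := by
  unfold nz step
  simp [h]

lemma nz_lt {n : ℕ} (m : Matching n) (φ) (x : Fin n → ℤ) (i : Fin n) (h : i < m.f i) :
    nz m φ x i = od m x i * sg (φ i (m.f i)) := by
  unfold nz step od sg
  simp only [h.ne', h, if_true, if_false]
  cases φ i (m.f i)
  · simp only [Bool.false_eq_true, if_false, ediv_cast0]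
    push_cast; ring
  · simp only [if_true, ediv_cast1]
    push_cast; ring

lemma nz_lt' {n : ℕ} (m : Matching n) (φ) (x : Fin n → ℤ) (i : Fin n) (h : i < m.f i) :
    nz m φ x (m.f i) = - (od m x i * sg (φ i (m.f i))) := by
  unfold nz step od sg
  simp only [m.invol, h.ne, h.not_gt, if_false, add_comm (x (m.f i)) (x i)]
  cases φ i (m.f i)
  · simp only [Bool.false_eq_true, if_false, ediv_cast1]
    push_cast; ring
  · simp only [if_true, ediv_cast0]
    push_cast; ring

lemma sum_nz {n : ℕ} (m : Matching n) (φ) (x : Fin n → ℤ) (y : Fin n → ℝ) :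
    ∑ u, y u * nz m φ x u =
    ∑ i, if i < m.f i then od m x i * (y i - y (m.f i)) * sg (φ i (m.f i)) else 0 := by
  rw [sum_pair m]
  refine Finset.sum_congr rfl fun i _ => ?_
  by_cases h : m.f i = i
  · simp [h, nz_fix m φ x i h]
  · by_cases h2 : i < m.f i
    · simp only [h, h2, if_true, if_false, nz_lt m φ x i h2, nz_lt' m φ x i h2]; ring
    · simp [h, h2]

lemma sum_step {n : ℕ} (m : Matching n) (φ) (x : Fin n → ℤ) :
    ∑ u, (step m φ x u : ℝ) = ∑ u, (x u : ℝ) := by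
  have h := sum_nz m φ x (fun _ => 1)
  simp only [sub_self, mul_zero, zero_mul, ite_self, Finset.sum_const_zero, one_mul] at h
  unfold nz at h
  rw [Finset.sum_sub_distrib, ← Finset.sum_div, Finset.sum_add_distrib,
    sum_inv m (fun u => (x u : ℝ))] at h
  linarith

lemma cx_step {n : ℕ} (m : Matching n) (φ) (x : Fin n → ℤ) (u : Fin n) :
    cx (step m φ x) u = (cx x u + cx x (m.f u)) / 2 + nz m φ x u := by
  unfold cx nz
  rw [sum_step]; ring

lemma dt_mv {n : ℕ} (m : Matching n) (y z : Fin n → ℝ) :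
    dt (mv m y) z = dt y (mv m z) := by
  unfold dt mv
  have := sum_inv m (fun u => y u * z (m.f u))
  simp only [m.invol] at this
  have h1 : ∀ u, (y u + y (m.f u))/2 * z u = (y u * z u)/2 + (y (m.f u) * z u)/2 := by intro u; ring
  have h2 : ∀ u, y u * ((z u + z (m.f u))/2) = (y u * z u)/2 + (y u * z (m.f u))/2 := by intro u; ring
  simp only [h1, h2, Finset.sum_add_distrib, ← Finset.sum_div, this]

lemma dt_step {n : ℕ} (m : Matching n) (φ) (x : Fin n → ℤ) (y : Fin n → ℝ) :
    dt y (cx (step m φ x)) = dt (mv m y) (cx x) +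
    ∑ i, if i < m.f i then od m x i * (y i - y (m.f i)) * sg (φ i (m.f i)) else 0 := by
  rw [dt_mv, ← sum_nz]
  unfold dt
  rw [← Finset.sum_add_distrib]
  refine Finset.sum_congr rfl fun u _ => ?_
  rw [cx_step]; unfold mv; ring

lemma nsq_mv {n : ℕ} (m : Matching n) (y : Fin n → ℝ) :
    nsq y - nsq (mv m y) = ∑ u, (y u - y (m.f u)) ^ 2 / 4 := by
  unfold nsq mv
  have h := sum_inv m (fun u => y u ^ 2)
  have h1 : ∀ u, (y u - y (m.f u)) ^ 2 / 4 = (y u)^2/2 + (y (m.f u))^2/2 - ((y u + y (m.f u)) / 2)^2 := by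
    intro u; ring
  simp only [h1, Finset.sum_sub_distrib, Finset.sum_add_distrib, ← Finset.sum_div, h]
  ring

lemma nsq_pair {n : ℕ} (m : Matching n) (y : Fin n → ℝ) :
    ∑ i, (if i < m.f i then (y i - y (m.f i)) ^ 2 else 0) = 2 * (nsq y - nsq (mv m y)) := by
  rw [nsq_mv, sum_pair m (fun u => (y u - y (m.f u)) ^ 2 / 4), Finset.mul_sum]
  refine Finset.sum_congr rfl fun i _ => ?_
  by_cases h : m.f i = i
  · simp [h]
  · by_cases h2 : i < m.f i
    · simp only [h, h2, if_true, if_false, m.invol]; ring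
    · simp [h, h2]

lemma nsq_mv_le {n : ℕ} (m : Matching n) (y : Fin n → ℝ) : nsq (mv m y) ≤ nsq y := by
  have := nsq_mv m y
  have h2 : 0 ≤ ∑ u, (y u - y (m.f u)) ^ 2 / 4 := Finset.sum_nonneg fun i _ => by positivity
  linarith

lemma ch_le (c : ℝ) : (Real.exp c + Real.exp (-c)) / 2 ≤ Real.exp (c ^ 2 / 2) := by
  rw [← Real.cosh_eq]; exact Real.cosh_le_exp_half_sq c

lemma Pm_exp {n : ℕ} (m : Matching n) (y : Fin n → ℝ) (x : Fin n → ℤ) :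
    Pm m (fun x => Real.exp (dt y (cx x))) x ≤
      Real.exp (dt (mv m y) (cx x) + (nsq y - nsq (mv m y)) / 4) := by
  unfold Pm
  have h1 : ∀ φ : Fin n → Fin n → Bool, Real.exp (dt y (cx (step m φ x))) =
      Real.exp (dt (mv m y) (cx x)) * ∏ i, (fun i b => Real.exp (if i < m.f i then
        od m x i * (y i - y (m.f i)) * sg b else 0)) i (φ i (m.f i)) := by
    intro φ
    rw [dt_step, Real.exp_add, Real.exp_sum]
  simp only [h1]
  rw [ex_mul, ex_prod m (fun i b => Real.exp (if i < m.f i then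
        od m x i * (y i - y (m.f i)) * sg b else 0)), Real.exp_add]
  refine mul_le_mul_of_nonneg_left ?_ (Real.exp_pos _).le
  have h2 : (nsq y - nsq (mv m y)) / 4 = ∑ i, (if i < m.f i then (y i - y (m.f i)) ^ 2 else 0) / 8 := by
    rw [← Finset.sum_div, nsq_pair]; ring
  rw [h2, Real.exp_sum]
  refine Finset.prod_le_prod (fun i _ => by positivity) fun i _ => ?_
  by_cases h : i < m.f i
  · simp only [h, if_true, sg, Bool.false_eq_true, if_false, mul_one, mul_neg]
    refine (ch_le _).trans (Real.exp_le_exp.2 ?_)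
    have h3 := od_nonneg m x i
    have h4 := od_le m x i
    have : od m x i ^ 2 ≤ 1/4 := by nlinarith
    have := mul_le_mul_of_nonneg_right this (sq_nonneg (y i - y (m.f i)))
    rw [mul_pow]; linarith
  · simp [h]

lemma Pm_mono {n : ℕ} (m : Matching n) {f g : (Fin n → ℤ) → ℝ} (h : ∀ x, f x ≤ g x) (x) :
    Pm m f x ≤ Pm m g x := ex_mono fun _ => h _

lemma Pl_mono {n : ℕ} (l : List (Matching n)) {f g : (Fin n → ℤ) → ℝ} (h : ∀ x, f x ≤ g x) :
    ∀ x, Pl l f x ≤ Pl l g x := by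
  induction l with
  | nil => exact h
  | cons m l ih => exact fun x => Pm_mono m ih x

lemma Pm_mul {n : ℕ} (m : Matching n) (c : ℝ) (f : (Fin n → ℤ) → ℝ) (x) :
    Pm m (fun x => c * f x) x = c * Pm m f x := ex_mul _ _

lemma Pl_mul {n : ℕ} (l : List (Matching n)) (c : ℝ) (f : (Fin n → ℤ) → ℝ) :
    ∀ x, Pl l (fun x => c * f x) x = c * Pl l f x := by
  induction l with
  | nil => intro x; rfl
  | cons m l ih =>
    intro x
    show Pm m (Pl l _) x = _
    rw [show Pl l (fun x => c * f x) = fun x => c * Pl l f x from funext ih, Pm_mul]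
    rfl

lemma Pl_add {n : ℕ} (l : List (Matching n)) (f g : (Fin n → ℤ) → ℝ) :
    ∀ x, Pl l (fun x => f x + g x) x = Pl l f x + Pl l g x := by
  induction l with
  | nil => intro x; rfl
  | cons m l ih =>
    intro x
    show Pm m (Pl l _) x = _
    rw [show Pl l (fun x => f x + g x) = fun x => Pl l f x + Pl l g x from funext ih]
    exact ex_add _ _

lemma Pl_const {n : ℕ} (l : List (Matching n)) (c : ℝ) :
    ∀ x, Pl l (fun _ => c) x = c := by
  induction l with
  | nil => intro x; rfl
  | cons m l ih =>
    intro x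
    show Pm m (Pl l _) x = _
    rw [show Pl l (fun _ => c) = fun _ => c from funext ih]
    exact ex_const _

lemma Pl_sum {n : ℕ} {ι : Type*} (s : Finset ι) (l : List (Matching n)) (f : ι → (Fin n → ℤ) → ℝ) :
    ∀ x, Pl l (fun x => ∑ i ∈ s, f i x) x = ∑ i ∈ s, Pl l (f i) x := by
  induction l with
  | nil => intro x; rfl
  | cons m l ih =>
    intro x
    show Pm m (Pl l _) x = _
    rw [show Pl l (fun x => ∑ i ∈ s, f i x) = fun x => ∑ i ∈ s, Pl l (f i) x from funext ih]
    exact ex_sum _ _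

lemma Pl_append {n : ℕ} (l l' : List (Matching n)) (f : (Fin n → ℤ) → ℝ) :
    Pl (l ++ l') f = Pl l (Pl l' f) := by
  induction l with
  | nil => rfl
  | cons m l ih => rw [List.cons_append]; simp only [Pl]; rw [ih]

lemma Bv_append {n : ℕ} (l l' : List (Matching n)) (q : Fin n → ℝ) :
    Bv (l ++ l') q = Bv l (Bv l' q) := by
  induction l with
  | nil => rfl
  | cons m l ih => rw [List.cons_append]; simp only [Bv]; rw [ih]

lemma Ll_append {n : ℕ} (l l' : List (Matching n)) (F : Fin n → (Fin n → ℤ) → ℝ) :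
    Ll (l ++ l') F = Ll l (Ll l' F) := by
  induction l with
  | nil => rfl
  | cons m l ih => rw [List.cons_append]; simp only [Ll]; rw [ih]

lemma nsq_Bv_le {n : ℕ} (l : List (Matching n)) (y : Fin n → ℝ) : nsq (Bv l y) ≤ nsq y := by
  induction l with
  | nil => exact le_rfl
  | cons m l ih => exact (nsq_mv_le m _).trans ih

/-- (a) -/
lemma Pl_exp {n : ℕ} (l : List (Matching n)) (y : Fin n → ℝ) : ∀ x : Fin n → ℤ,
    Pl l (fun x => Real.exp (dt y (cx x))) x ≤
      Real.exp (dt (Bv l y) (cx x) + (nsq y - nsq (Bv l y)) / 4) := by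
  induction l with
  | nil => intro x; simp [Pl, Bv]
  | cons m l ih =>
    intro x
    refine (Pm_mono m ih x).trans ?_
    have h : ∀ x : Fin n → ℤ, Real.exp (dt (Bv l y) (cx x) + (nsq y - nsq (Bv l y)) / 4) =
      Real.exp ((nsq y - nsq (Bv l y)) / 4) * Real.exp (dt (Bv l y) (cx x)) := by
      intro x; rw [← Real.exp_add, add_comm]
    simp only [h]
    rw [Pm_mul]
    refine (mul_le_mul_of_nonneg_left (Pm_exp m _ x) (Real.exp_pos _).le).trans ?_
    rw [← Real.exp_add]
    apply le_of_eq
    congr 1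
    simp only [Bv]; ring

/-- scalar -/
lemma scal_aux (M g t : ℝ) (hM : 0 ≤ M) (hg : 0 ≤ g * t) :
    (M - g / 2) * Real.exp t + (M + g / 2) * Real.exp (-t) ≤ 2 * M * Real.exp (t ^ 2 / 2) := by
  have h1 := ch_le t
  have h2 : 0 ≤ g * (Real.exp t - Real.exp (-t)) := by
    rcases lt_trichotomy t 0 with h | h | h
    · have : g ≤ 0 := by nlinarith
      have h3 : Real.exp t ≤ Real.exp (-t) := Real.exp_le_exp.2 (by linarith)
      nlinarith
    · simp [h]
    · have : 0 ≤ g := by nlinarith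
      have h3 : Real.exp (-t) ≤ Real.exp t := Real.exp_le_exp.2 (by linarith)
      nlinarith
  nlinarith [mul_le_mul_of_nonneg_left h1 hM]

lemma scal_odd (β a b κ1 κ0 : ℝ) (hβ : 0 ≤ β) (ha : 0 ≤ a) (hb : 0 ≤ b) (h1 : 0 ≤ κ1) (h0 : 0 ≤ κ0)
    (hs : κ1 + κ0 ≤ 1) :
    ((κ1 * (a * Real.exp (-(β * a))) + κ0 * (b * Real.exp (-(β * b)))) * Real.exp (β * (1/2 * (a - b))) +
    (κ0 * (a * Real.exp (-(β * a))) + κ1 * (b * Real.exp (-(β * b)))) * Real.exp (-(β * (1/2 * (a - b))))) / 2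
     ≤ (a + b) / 2 * Real.exp (-(β * ((a + b) / 2))) * Real.exp (β ^ 2 * (a - b) ^ 2 / 2) := by
  set E := Real.exp (-(β * ((a + b) / 2))) with hE
  have e1 : Real.exp (-(β * a)) * Real.exp (β * (1/2 * (a - b))) = E := by
    rw [← Real.exp_add, hE]; congr 1; ring
  have e2 : Real.exp (-(β * b)) * Real.exp (-(β * (1/2 * (a - b)))) = E := by
    rw [← Real.exp_add, hE]; congr 1; ring
  have e3 : Real.exp (-(β * b)) * Real.exp (β * (1/2 * (a - b))) = E * Real.exp (β * (a - b)) := by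
    rw [← Real.exp_add, hE, ← Real.exp_add]; congr 1; ring
  have e4 : Real.exp (-(β * a)) * Real.exp (-(β * (1/2 * (a - b)))) = E * Real.exp (-(β * (a - b))) := by
    rw [← Real.exp_add, hE, ← Real.exp_add]; congr 1; ring
  have hEp : 0 < E := Real.exp_pos _
  have key := scal_aux ((a + b) / 2) (a - b) (β * (a - b)) (by positivity)
    (by nlinarith [mul_nonneg hβ (sq_nonneg (a - b))])
  rw [mul_pow] at key
  set R := Real.exp (β ^ 2 * (a - b) ^ 2 / 2)
  have hR : 1 ≤ R := Real.one_le_exp (by positivity)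
  have hl : ((κ1 * (a * Real.exp (-(β * a))) + κ0 * (b * Real.exp (-(β * b)))) * Real.exp (β * (1/2 * (a - b))) +
    (κ0 * (a * Real.exp (-(β * a))) + κ1 * (b * Real.exp (-(β * b)))) * Real.exp (-(β * (1/2 * (a - b))))) / 2
    = κ1 * ((a + b) / 2 * E) + κ0 / 2 * E * (b * Real.exp (β * (a - b)) + a * Real.exp (-(β * (a - b)))) := by
    linear_combination (κ1 * a / 2) * e1 + (κ1 * b / 2) * e2 + (κ0 * b / 2) * e3 + (κ0 * a / 2) * e4
  rw [hl]
  have key2 : b * Real.exp (β * (a - b)) + a * Real.exp (-(β * (a - b))) ≤ (a + b) * R := by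
    refine le_of_eq_of_le ?_ (key.trans (le_of_eq ?_)) <;> ring
  have hME : 0 ≤ (a + b) / 2 * E := by positivity
  have t1 : κ1 * ((a + b) / 2 * E) ≤ κ1 * ((a + b) / 2 * E * R) :=
    mul_le_mul_of_nonneg_left (le_mul_of_one_le_right hME hR) h1
  have t2 : κ0 / 2 * E * (b * Real.exp (β * (a - b)) + a * Real.exp (-(β * (a - b)))) ≤
     κ0 / 2 * E * ((a + b) * R) := mul_le_mul_of_nonneg_left key2 (by positivity)
  have t3 : (κ1 + κ0) * ((a + b) / 2 * E * R) ≤ 1 * ((a + b) / 2 * E * R) :=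
    mul_le_mul_of_nonneg_right hs (by positivity)
  nlinarith

lemma scal_even (β a b k : ℝ) (hβ : 0 ≤ β) (ha : 0 ≤ a) (hb : 0 ≤ b) (h0 : 0 ≤ k)
    (hs : k ≤ 1 / 2) :
    k * (a * Real.exp (-(β * a))) + k * (b * Real.exp (-(β * b)))
     ≤ (a + b) / 2 * Real.exp (-(β * ((a + b) / 2))) * Real.exp (β ^ 2 * (a - b) ^ 2 / 2) := by
  set E := Real.exp (-(β * ((a + b) / 2))) with hE
  have e3 : Real.exp (-(β * b)) = E * Real.exp (β * (a - b) / 2) := by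
    rw [hE, ← Real.exp_add]; congr 1; ring
  have e4 : Real.exp (-(β * a)) = E * Real.exp (-(β * (a - b) / 2)) := by
    rw [hE, ← Real.exp_add]; congr 1; ring
  have hEp : 0 < E := Real.exp_pos _
  have key := scal_aux ((a + b) / 2) (a - b) (β * (a - b) / 2) (by positivity)
    (by nlinarith [mul_nonneg hβ (sq_nonneg (a - b))])
  have hR : Real.exp ((β * (a - b) / 2) ^ 2 / 2) ≤ Real.exp (β ^ 2 * (a - b) ^ 2 / 2) :=
    Real.exp_le_exp.2 (by nlinarith [mul_nonneg (sq_nonneg β) (sq_nonneg (a - b))])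
  set R := Real.exp (β ^ 2 * (a - b) ^ 2 / 2)
  rw [e3, e4]
  have key2 : b * Real.exp (β * (a - b) / 2) + a * Real.exp (-(β * (a - b) / 2)) ≤ (a + b) * R := by
    refine le_of_eq_of_le ?_ (key.trans (mul_le_mul_of_nonneg_left hR (by positivity) |>.trans (le_of_eq ?_))) <;> ring
  have hR0 : 0 < R := Real.exp_pos _
  calc _ = k * E * (b * Real.exp (β * (a - b) / 2) + a * Real.exp (-(β * (a - b) / 2))) := by ring
    _ ≤ k * E * ((a + b) * R) := mul_le_mul_of_nonneg_left key2 (by positivity)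
    _ = k * ((a + b) * E * R) := by ring
    _ ≤ 1 / 2 * ((a + b) * E * R) := mul_le_mul_of_nonneg_right hs (by positivity)
    _ = _ := by ring



lemma hh_nonneg {n : ℕ} (x : Fin n → ℤ) (u) : 0 ≤ hh x u := le_max_right _ _

lemma tq_nonneg {n : ℕ} (m : Matching n) {F : Fin n → (Fin n → ℤ) → ℝ} (hF : ∀ u x, 0 ≤ F u x) (u x) :
    0 ≤ tq m F u x := by
  unfold tq
  have := hh_nonneg x u; have := hh_nonneg x (m.f u)
  have := hF u x; have := hF (m.f u) x
  positivity

lemma tq_symm {n : ℕ} (m : Matching n) (F : Fin n → (Fin n → ℤ) → ℝ) (u x) :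
    tq m F (m.f u) x = tq m F u x := by
  unfold tq; rw [m.invol]; congr 1 <;> ring

lemma mv_symm {n : ℕ} (m : Matching n) (q : Fin n → ℝ) (u) : mv m q (m.f u) = mv m q u := by
  unfold mv; rw [m.invol]; ring

lemma mv_nonneg {n : ℕ} (m : Matching n) {q : Fin n → ℝ} (hq : ∀ u, 0 ≤ q u) (u) : 0 ≤ mv m q u := by
  unfold mv; have := hq u; have := hq (m.f u); positivity

lemma Bv_nonneg {n : ℕ} (l : List (Matching n)) {q : Fin n → ℝ} (hq : ∀ u, 0 ≤ q u) : ∀ u, 0 ≤ Bv l q u := by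
  induction l with
  | nil => exact hq
  | cons m l ih => exact mv_nonneg m ih

lemma dt_smul {n : ℕ} (c : ℝ) (y z : Fin n → ℝ) : dt (fun u => c * y u) z = c * dt y z := by
  unfold dt; rw [Finset.mul_sum]; exact Finset.sum_congr rfl fun i _ => by ring

lemma nsq_smul {n : ℕ} (c : ℝ) (y : Fin n → ℝ) : nsq (fun u => c * y u) = c ^ 2 * nsq y := by
  unfold nsq; rw [Finset.mul_sum]; exact Finset.sum_congr rfl fun i _ => by ring

lemma mv_smul {n : ℕ} (m : Matching n) (c : ℝ) (y : Fin n → ℝ) :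
    mv m (fun u => c * y u) = fun u => c * mv m y u := by
  funext u; unfold mv; ring

lemma Bv_smul {n : ℕ} (l : List (Matching n)) (c : ℝ) (y : Fin n → ℝ) :
    Bv l (fun u => c * y u) = fun u => c * Bv l y u := by
  induction l with
  | nil => rfl
  | cons m l ih => simp only [Bv]; rw [ih, mv_smul]

lemma Lt_Ft_lt {n : ℕ} (m : Matching n) {β : ℝ} (hβ : 0 ≤ β) {q : Fin n → ℝ} (hq : ∀ u, 0 ≤ q u)
    (u : Fin n) (hu : u < m.f u) (x : Fin n → ℤ) : Lt m (Ft β q) u x ≤ Ft β (mv m q) u x := by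
  set v := m.f u with hv
  set s := od m x u with hs
  let H : Bool → ℝ := fun b => max ((cx x u + cx x v) / 2 + s * sg b - 5) 0
  have hH : ∀ b, 0 ≤ H b := fun b => le_max_right _ _
  let κ : Bool → ℝ := fun b => H b / (H b + H (!b))
  have hκ0 : ∀ b, 0 ≤ κ b := fun b => div_nonneg (hH b) (add_nonneg (hH b) (hH _))
  have hκs : κ true + κ false ≤ 1 := by
    show H true / (H true + H false) + H false / (H false + H true) ≤ 1
    rw [add_comm (H false) (H true), ← add_div]
    exact div_self_le_one _
  let W : Bool → ℝ := fun b => κ b * (q u * Real.exp (-(β * q u))) + κ (!b) * (q v * Real.exp (-(β * q v)))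
  have hW : ∀ b, 0 ≤ W b := fun b => by
    have := hκ0 b; have := hκ0 (!b); have := hq u; have := hq v
    show 0 ≤ κ b * (q u * Real.exp (-(β * q u))) + κ (!b) * (q v * Real.exp (-(β * q v)))
    positivity
  let D : ℝ := Real.exp (β * dt (mv m q) (cx x) - β ^ 2 * nsq q)
  let g : Fin n → Bool → ℝ := fun i b => (if i = u then W b else 1) *
    Real.exp (if i < m.f i then β * (od m x i * (q i - q (m.f i))) * sg b else 0)
  have h1 : ∀ φ : Fin n → Fin n → Bool, tq m (Ft β q) u (step m φ x) =
      D * ∏ i, g i (φ i (m.f i)) := by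
    intro φ
    have a1 : hh (step m φ x) u = H (φ u v) := by
      show max _ _ = max _ _
      rw [cx_step, nz_lt m φ x u hu]
    have a2 : hh (step m φ x) v = H (!φ u v) := by
      show max _ _ = max _ _
      rw [cx_step, hv, nz_lt' m φ x u hu, m.invol, sg_not]
      congr 1; ring
    have a3 : ∏ i, g i (φ i (m.f i)) = W (φ u v) * Real.exp (β * ∑ i, if i < m.f i then od m x i * (q i - q (m.f i)) * sg (φ i (m.f i)) else 0) := by
      simp only [g]
      rw [Finset.prod_mul_distrib, Finset.prod_ite_eq', ← Real.exp_sum, if_pos (Finset.mem_univ _),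
        Finset.mul_sum]
      congr 2
      refine Finset.sum_congr rfl fun i _ => ?_
      split_ifs <;> ring
    rw [a3]
    unfold tq
    rw [← hv, a1, a2]
    unfold Ft
    rw [dt_step]
    set X := ∑ i, if i < m.f i then od m x i * (q i - q (m.f i)) * sg (φ i (m.f i)) else 0
    have b1 : ∀ w, Real.exp (β * (dt (mv m q) (cx x) + X - q w) - β ^ 2 * nsq q) =
      D * Real.exp (-(β * q w)) * Real.exp (β * X) := by
      intro w
      show _ = Real.exp _ * _ * _
      rw [← Real.exp_add, ← Real.exp_add]; congr 1; ring
    rw [b1, b1]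
    have b2 : κ (!φ u v) = H (!φ u v) / (H (φ u v) + H (!φ u v)) := by
      show H (!φ u v) / (H (!φ u v) + H (!!φ u v)) = _
      rw [Bool.not_not, add_comm]
    show _ = D * ((κ (φ u v) * _ + κ (!φ u v) * _) * _)
    rw [b2]
    show _ = D * ((H (φ u v) / (H (φ u v) + H (!φ u v)) * _ + _) * _)
    ring
  unfold Lt
  simp only [h1]
  rw [ex_mul, ex_prod m g]
  have h2 : ∀ i, (g i true + g i false) / 2 ≤ (if i = u then (q u + q v) / 2 * Real.exp (-(β * ((q u + q v) / 2))) else 1) *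
      Real.exp (if i < m.f i then β ^ 2 * (q i - q (m.f i)) ^ 2 / 2 else 0) := by
    intro i
    simp only [g]
    by_cases hi : i = u
    · subst hi
      simp only [hu, if_true, sg, mul_one, Bool.false_eq_true, if_false, mul_neg, ← hv, ← hs]
      rcases (show s = 1/2 ∨ s = 0 by rw [hs]; unfold od; split_ifs <;> simp) with h | h
      · rw [h]
        exact scal_odd β (q i) (q v) (κ true) (κ false) hβ (hq _) (hq _) (hκ0 _) (hκ0 _) hκs
      · have hk : κ true = κ false := by simp only [κ, H, h, zero_mul]
        have := scal_even β (q i) (q v) (κ true) hβ (hq _) (hq _) (hκ0 _) (by linarith)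
        simp only [h, zero_mul, mul_zero, neg_zero, Real.exp_zero, mul_one]
        refine le_of_eq_of_le ?_ this
        simp only [W, Bool.not_true, Bool.not_false, hk]
        ring
    · simp only [hi, if_false, one_mul]
      by_cases h : i < m.f i
      · simp only [h, if_true, sg, Bool.false_eq_true, if_false, mul_one, mul_neg]
        refine (ch_le _).trans (Real.exp_le_exp.2 ?_)
        have h3 := od_nonneg m x i
        have h4 := od_le m x i
        have h5 : od m x i ^ 2 ≤ 1 := by nlinarith
        have := mul_le_mul_of_nonneg_right h5 (mul_nonneg (sq_nonneg β) (sq_nonneg (q i - q (m.f i))))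
        rw [mul_pow, mul_pow]; nlinarith
      · simp [h]
  have h3 : ∏ i, (g i true + g i false) / 2 ≤ (q u + q v) / 2 * Real.exp (-(β * ((q u + q v) / 2))) *
      Real.exp (β ^ 2 * (nsq q - nsq (mv m q))) := by
    refine (Finset.prod_le_prod (fun i _ => ?_) fun i _ => h2 i).trans (le_of_eq ?_)
    · have : ∀ b, 0 ≤ g i b := fun b => by
        show 0 ≤ _ * _
        have := hW b
        split_ifs <;> positivity
      have h5 := this true; have h6 := this false; positivity
    · rw [Finset.prod_mul_distrib, Finset.prod_ite_eq', ← Real.exp_sum, if_pos (Finset.mem_univ _)]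
      congr 2
      have := nsq_pair m q
      rw [show nsq q - nsq (mv m q) = (2 * (nsq q - nsq (mv m q))) / 2 by ring, ← this, Finset.sum_div, Finset.mul_sum]
      refine Finset.sum_congr rfl fun i _ => ?_
      split_ifs <;> ring
  refine (mul_le_mul_of_nonneg_left h3 (Real.exp_pos _).le).trans (le_of_eq ?_)
  unfold Ft
  rw [show mv m q u = (q u + q v) / 2 from rfl]
  set M := (q u + q v) / 2
  rw [show Real.exp (β * dt (mv m q) (cx x) - β ^ 2 * nsq q) * (M * Real.exp (-(β * M)) * Real.exp (β ^ 2 * (nsq q - nsq (mv m q)))) =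
    M * (Real.exp (β * dt (mv m q) (cx x) - β ^ 2 * nsq q) * Real.exp (-(β * M)) * Real.exp (β ^ 2 * (nsq q - nsq (mv m q)))) by ring]
  rw [← Real.exp_add, ← Real.exp_add]
  congr 2; ring

lemma Ft_nonneg {n : ℕ} (β : ℝ) {q : Fin n → ℝ} (hq : ∀ u, 0 ≤ q u) (u x) : 0 ≤ Ft β q u x :=
  mul_nonneg (hq u) (Real.exp_pos _).le

lemma Lt_Ft {n : ℕ} (m : Matching n) {β : ℝ} (hβ : 0 ≤ β) {q : Fin n → ℝ} (hq : ∀ u, 0 ≤ q u)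
    (u : Fin n) (x : Fin n → ℤ) : Lt m (Ft β q) u x ≤ Ft β (mv m q) u x := by
  rcases lt_trichotomy u (m.f u) with h | h | h
  · exact Lt_Ft_lt m hβ hq u h x
  · have h1 : ∀ x, tq m (Ft β q) u x ≤ (q u * Real.exp (-(β * q u) - β ^ 2 * nsq q)) * Real.exp (dt (fun u => β * q u) (cx x)) := by
      intro x
      have : (q u * Real.exp (-(β * q u) - β ^ 2 * nsq q)) * Real.exp (dt (fun u => β * q u) (cx x)) = Ft β q u x := by
        rw [dt_smul, mul_assoc, ← Real.exp_add]; unfold Ft; congr 2; ring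
      rw [this]
      unfold tq
      rw [← h, ← add_mul]
      have h0 := hh_nonneg x u
      have := Ft_nonneg β hq u x
      rw [mul_div_right_comm]
      exact mul_le_of_le_one_left this (div_self_le_one _)
    refine (ex_mono fun φ => h1 _).trans ?_
    rw [ex_mul]
    have h2 := Pm_exp m (fun u => β * q u) x
    refine (mul_le_mul_of_nonneg_left h2 (mul_nonneg (hq u) (Real.exp_pos _).le)).trans ?_
    rw [mv_smul, dt_smul, nsq_smul, nsq_smul, mul_assoc, ← Real.exp_add]
    unfold Ft
    have h3 : mv m q u = q u := by unfold mv; rw [← h]; ring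
    rw [h3]
    refine mul_le_mul_of_nonneg_left (Real.exp_le_exp.2 ?_) (hq u)
    have := nsq_mv_le m q
    nlinarith [mul_nonneg (sq_nonneg β) (sub_nonneg.2 this)]
  · have h1 := Lt_Ft_lt m hβ hq (m.f u) (by rw [m.invol]; exact h) x
    have h2 : Lt m (Ft β q) (m.f u) x = Lt m (Ft β q) u x := by
      unfold Lt; simp only [tq_symm]
    have h3 : Ft β (mv m q) (m.f u) x = Ft β (mv m q) u x := by
      unfold Ft; rw [mv_symm]
    rw [h2, h3] at h1; exact h1

/-- monotone -/
lemma Lt_mono {n : ℕ} (m : Matching n) {F F' : Fin n → (Fin n → ℤ) → ℝ}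
    (h : ∀ u x, 0 < hh x u → F u x ≤ F' u x) (u x) : Lt m F u x ≤ Lt m F' u x := by
  refine ex_mono fun φ => ?_
  unfold tq
  have h1 := hh_nonneg (step m φ x) u
  have h2 := hh_nonneg (step m φ x) (m.f u)
  have key : ∀ w, hh (step m φ x) w * F w (step m φ x) ≤ hh (step m φ x) w * F' w (step m φ x) := by
    intro w
    rcases (hh_nonneg (step m φ x) w).eq_or_lt with h | h'
    · rw [← h]; simp
    · exact mul_le_mul_of_nonneg_left (h _ _ h') h'.le
  exact div_le_div_of_nonneg_right (add_le_add (key _) (key _)) (by positivity)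

lemma Ll_mono {n : ℕ} (l : List (Matching n)) {F F' : Fin n → (Fin n → ℤ) → ℝ}
    (h : ∀ u x, F u x ≤ F' u x) : ∀ u x, Ll l F u x ≤ Ll l F' u x := by
  induction l with
  | nil => exact h
  | cons m l ih => exact Lt_mono m fun u x _ => ih u x

lemma Ll_mono' {n : ℕ} (l : List (Matching n)) (hl : l ≠ []) {F F' : Fin n → (Fin n → ℤ) → ℝ}
    (h : ∀ u x, 0 < hh x u → F u x ≤ F' u x) : ∀ u x, Ll l F u x ≤ Ll l F' u x := by
  induction l with
  | nil => exact absurd rfl hl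
  | cons m l ih =>
    by_cases h0 : l = []
    · subst h0; exact Lt_mono m h
    · exact Lt_mono m fun u x _ => ih h0 u x

lemma Ll_Ft {n : ℕ} (l : List (Matching n)) {β : ℝ} (hβ : 0 ≤ β) {q : Fin n → ℝ} (hq : ∀ u, 0 ≤ q u) :
    ∀ (u : Fin n) (x : Fin n → ℤ), Ll l (Ft β q) u x ≤ Ft β (Bv l q) u x := by
  induction l with
  | nil => exact fun _ _ => le_rfl
  | cons m l ih =>
    intro u x
    exact (Lt_mono m (fun u x _ => ih u x) u x).trans (Lt_Ft m hβ (Bv_nonneg l hq) u x)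

lemma Lt_mul {n : ℕ} (m : Matching n) (c : ℝ) (F : Fin n → (Fin n → ℤ) → ℝ) (u x) :
    Lt m (fun u x => c * F u x) u x = c * Lt m F u x := by
  unfold Lt; rw [← ex_mul]; congr 1; funext φ; unfold tq; ring

lemma Ll_mul {n : ℕ} (l : List (Matching n)) (c : ℝ) (F : Fin n → (Fin n → ℤ) → ℝ) :
    Ll l (fun u x => c * F u x) = fun u x => c * Ll l F u x := by
  induction l with
  | nil => rfl
  | cons m l ih => simp only [Ll]; rw [ih]; funext u x; exact Lt_mul m c _ u x

lemma Lt_add {n : ℕ} (m : Matching n) (F G : Fin n → (Fin n → ℤ) → ℝ) (u x) :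
    Lt m (fun u x => F u x + G u x) u x = Lt m F u x + Lt m G u x := by
  unfold Lt; rw [← ex_add]; congr 1; funext φ; unfold tq; ring

lemma Ll_add {n : ℕ} (l : List (Matching n)) (F G : Fin n → (Fin n → ℤ) → ℝ) :
    Ll l (fun u x => F u x + G u x) = fun u x => Ll l F u x + Ll l G u x := by
  induction l with
  | nil => rfl
  | cons m l ih => simp only [Ll]; rw [ih]; funext u x; exact Lt_add m _ _ u x

lemma Lt_sum {n : ℕ} {ι : Type*} (s : Finset ι) (m : Matching n) (F : ι → Fin n → (Fin n → ℤ) → ℝ) (u x) :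
    Lt m (fun u x => ∑ i ∈ s, F i u x) u x = ∑ i ∈ s, Lt m (F i) u x := by
  unfold Lt; rw [← ex_sum]; congr 1; funext φ; unfold tq
  rw [← Finset.sum_div, Finset.sum_add_distrib, Finset.mul_sum, Finset.mul_sum]

lemma Ll_sum {n : ℕ} {ι : Type*} (s : Finset ι) (l : List (Matching n)) (F : ι → Fin n → (Fin n → ℤ) → ℝ) :
    Ll l (fun u x => ∑ i ∈ s, F i u x) = fun u x => ∑ i ∈ s, Ll l (F i) u x := by
  induction l with
  | nil => rfl
  | cons m l ih => simp only [Ll]; rw [ih]; funext u x; exact Lt_sum s m _ u x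

lemma Ll_nonneg {n : ℕ} (l : List (Matching n)) {F : Fin n → (Fin n → ℤ) → ℝ} (h : ∀ u x, 0 ≤ F u x) :
    ∀ u x, 0 ≤ Ll l F u x := by
  induction l with
  | nil => exact h
  | cons m l ih =>
    intro u x
    show 0 ≤ ex _
    rw [← ex_const (Ω := Fin n → Fin n → Bool) (0 : ℝ)]
    exact ex_mono fun φ => tq_nonneg m ih _ _

lemma Ll_one {n : ℕ} (l : List (Matching n)) {F : Fin n → (Fin n → ℤ) → ℝ} (h : ∀ u x, F u x ≤ 1) :
    ∀ u x, Ll l F u x ≤ 1 := by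
  induction l with
  | nil => exact h
  | cons m l ih =>
    intro u x
    show ex _ ≤ 1
    rw [← ex_const (Ω := Fin n → Fin n → Bool) (1 : ℝ)]
    refine ex_mono fun φ => ?_
    unfold tq
    set x' := step m φ x
    have h1 := hh_nonneg x' u
    have h2 := hh_nonneg x' (m.f u)
    refine (div_le_div_of_nonneg_right (add_le_add (mul_le_mul_of_nonneg_left (ih _ _) h1) (mul_le_mul_of_nonneg_left (ih _ _) h2)) (by positivity)).trans ?_
    rw [mul_one, mul_one]
    exact div_self_le_one _



lemma step_le {n : ℕ} (m : Matching n) (φ) (x : Fin n → ℤ) (u : Fin n) :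
    step m φ x u ≤ max (x u) (x (m.f u)) := by
  have e : ∀ s : ℤ, Int.ediv s 2 = s / 2 := fun _ => rfl
  unfold step; simp only [e]
  split_ifs <;> omega

lemma step_ge {n : ℕ} (m : Matching n) (φ) (x : Fin n → ℤ) (u : Fin n) :
    min (x u) (x (m.f u)) ≤ step m φ x u := by
  have e : ∀ s : ℤ, Int.ediv s 2 = s / 2 := fun _ => rfl
  unfold step; simp only [e]
  split_ifs <;> omega

lemma step_odd_even {n : ℕ} (m : Matching n) (φ) (x : Fin n → ℤ) (u : Fin n) :
    cx (step m φ x) u + cx (step m φ x) (m.f u) = cx x u + cx x (m.f u) := by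
  rw [cx_step, cx_step, m.invol]
  rcases lt_trichotomy u (m.f u) with h | h | h
  · rw [nz_lt m φ x u h, nz_lt' m φ x u h]; ring
  · rw [nz_fix m φ x u h.symm, ← h, nz_fix m φ x u h.symm]; ring
  · have h' : m.f u < m.f (m.f u) := by rw [m.invol]; exact h
    have h1 := nz_lt m φ x _ h'
    have h2 := nz_lt' m φ x _ h'
    rw [m.invol] at h1 h2
    rw [h1, h2]; ring

lemma cx_step_le {n : ℕ} (m : Matching n) (φ) (x : Fin n → ℤ) (u : Fin n) :
    cx (step m φ x) u ≤ max (cx x u) (cx x (m.f u)) := by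
  unfold cx
  rw [sum_step, max_sub_sub_right]
  have := step_le m φ x u
  have h : (step m φ x u : ℝ) ≤ max (x u : ℝ) (x (m.f u)) := by exact_mod_cast this
  linarith

lemma cx_step_ge {n : ℕ} (m : Matching n) (φ) (x : Fin n → ℤ) (u : Fin n) :
    min (cx x u) (cx x (m.f u)) ≤ cx (step m φ x) u := by
  unfold cx
  rw [sum_step, min_sub_sub_right]
  have := step_ge m φ x u
  have h : min (x u : ℝ) (x (m.f u)) ≤ (step m φ x u : ℝ) := by exact_mod_cast this
  linarith

lemma conv_aux (a b c d : ℝ) (h : c + d = a + b) (h1 : c ≤ max a b) (h2 : min a b ≤ c) :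
    max (c - 5) 0 + max (d - 5) 0 ≤ max (a - 5) 0 + max (b - 5) 0 := by
  rcases le_total a b with hab | hab
  · rw [max_eq_right hab] at h1
    rw [min_eq_left hab] at h2
    rcases max_cases (c - 5) 0 with h3 | h3 <;> rcases max_cases (d - 5) 0 with h4 | h4 <;>
    rcases max_cases (a - 5) 0 with h5 | h5 <;> rcases max_cases (b - 5) 0 with h6 | h6 <;> linarith
  · rw [max_eq_left hab] at h1
    rw [min_eq_right hab] at h2
    rcases max_cases (c - 5) 0 with h3 | h3 <;> rcases max_cases (d - 5) 0 with h4 | h4 <;>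
    rcases max_cases (a - 5) 0 with h5 | h5 <;> rcases max_cases (b - 5) 0 with h6 | h6 <;> linarith

lemma hh_step {n : ℕ} (m : Matching n) (φ) (x : Fin n → ℤ) (u : Fin n) :
    hh (step m φ x) u + hh (step m φ x) (m.f u) ≤ hh x u + hh x (m.f u) :=
  conv_aux _ _ _ _ (step_odd_even m φ x u) (cx_step_le m φ x u) (cx_step_ge m φ x u)

lemma Pm_hh {n : ℕ} (m : Matching n) {F : Fin n → (Fin n → ℤ) → ℝ} (hF : ∀ u x, 0 ≤ F u x) (x) :
    Pm m (fun x' => ∑ u, hh x' u * F u x') x ≤ ∑ u, hh x u * Lt m F u x := by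
  have : ∑ u, hh x u * Lt m F u x = ex fun φ => ∑ u, hh x u * tq m F u (step m φ x) := by
    rw [ex_sum]; refine Finset.sum_congr rfl fun u _ => ?_
    rw [ex_mul]; rfl
  rw [this]
  refine ex_mono fun φ => ?_
  set x' := step m φ x with hx'
  have h1 := sum_inv m (fun u => hh x' u * F u x')
  have h2 := sum_inv m (fun u => hh x u * tq m F u x')
  simp only [tq_symm] at h2
  have h3 : ∑ u, (hh x' u * F u x' + hh x' (m.f u) * F (m.f u) x') ≤
      ∑ u, (hh x u * tq m F u x' + hh x (m.f u) * tq m F u x') := by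
    refine Finset.sum_le_sum fun u _ => ?_
    have h4 : hh x' u * F u x' + hh x' (m.f u) * F (m.f u) x' = (hh x' u + hh x' (m.f u)) * tq m F u x' := by
      unfold tq
      rcases (add_nonneg (hh_nonneg x' u) (hh_nonneg x' (m.f u))).eq_or_lt with h | h
      · have h5 : hh x' u = 0 := by linarith [hh_nonneg x' u, hh_nonneg x' (m.f u)]
        have h6 : hh x' (m.f u) = 0 := by linarith [hh_nonneg x' u, hh_nonneg x' (m.f u)]
        simp [h5, h6]
      · field_simp
    rw [h4, ← add_mul]
    exact mul_le_mul_of_nonneg_right (hh_step m φ x u) (tq_nonneg m hF _ _)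
  rw [Finset.sum_add_distrib, Finset.sum_add_distrib] at h3
  linarith

/-- (c) -/
lemma Pl_hh {n : ℕ} (l : List (Matching n)) {F : Fin n → (Fin n → ℤ) → ℝ} (hF : ∀ u x, 0 ≤ F u x) :
    ∀ x, Pl l (fun x' => ∑ u, hh x' u * F u x') x ≤ ∑ u, hh x u * Ll l F u x := by
  induction l with
  | nil => exact fun _ => le_rfl
  | cons m l ih =>
    intro x
    exact (Pm_mono m ih x).trans (Pm_hh m (Ll_nonneg l hF) x)

lemma mv_pos {n : ℕ} (m : Matching n) {q : Fin n → ℝ} (hq : ∀ u, 0 < q u) (u) : 0 < mv m q u := by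
  unfold mv; have := hq u; have := hq (m.f u); positivity

lemma ev_pos {n : ℕ} (l : List (Matching n)) : ∀ {q : Fin n → ℝ} (_ : ∀ u, 0 < q u) (u), 0 < ev l q u := by
  induction l with
  | nil => exact fun h => h
  | cons m l ih => exact fun h => ih (mv_pos m h)

/-- (Z) -/
lemma Ll_Z {n : ℕ} (l : List (Matching n)) {F : Fin n → (Fin n → ℤ) → ℝ} (hF : ∀ u x, 0 ≤ F u x)
    {a : ℝ} (ha : 0 ≤ a) :
    ∀ (Z : Fin n → ℝ) (_ : ∀ u, 0 < Z u) (u x),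
    Ll l (fun u x => F u x * (ev l Z u) ^ (-a)) u x ≤
      (2 : ℝ) ^ (a * l.length) * (Z u) ^ (-a) * Ll l F u x := by
  induction l with
  | nil => intro Z hZ u x; simp [Ll, ev, mul_comm]
  | cons m l ih =>
    intro Z hZ u x
    simp only [Ll, ev]
    refine (Lt_mono m (fun u x _ => ih (mv m Z) (mv_pos m hZ) u x) u x).trans ?_
    have h1 : Lt m (fun u x => (2 : ℝ) ^ (a * l.length) * (mv m Z u) ^ (-a) * Ll l F u x) u x =
      (2 : ℝ) ^ (a * l.length) * (mv m Z u) ^ (-a) * Lt m (Ll l F) u x := by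
      unfold Lt; rw [← ex_mul]; congr 1; funext φ
      unfold tq; beta_reduce; rw [mv_symm]; ring
    rw [h1]
    have h0 : 0 ≤ Lt m (Ll l F) u x := Ll_nonneg (m :: l) hF u x
    refine mul_le_mul_of_nonneg_right ?_ h0
    have h2 : (mv m Z u) ^ (-a) ≤ 2 ^ a * (Z u) ^ (-a) := by
      have h3 : Z u / 2 ≤ mv m Z u := by unfold mv; have := hZ (m.f u); linarith
      refine (Real.rpow_le_rpow_of_nonpos (by have := hZ u; positivity) h3 (by linarith)).trans (le_of_eq ?_)
      rw [Real.div_rpow (hZ u).le (by norm_num), Real.rpow_neg (by norm_num : (0:ℝ) ≤ 2), div_inv_eq_mul, mul_comm]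
    calc (2 : ℝ) ^ (a * l.length) * (mv m Z u) ^ (-a) ≤ (2 : ℝ) ^ (a * l.length) * (2 ^ a * (Z u) ^ (-a)) :=
          mul_le_mul_of_nonneg_left h2 (by positivity)
      _ = _ := by
        rw [← mul_assoc, ← Real.rpow_add (by norm_num)]
        congr 2; simp; ring



def per {A : Type*} (b : List A) : ℕ → List A
  | 0 => []
  | k + 1 => b ++ per b k

lemma per_add {A : Type*} (b : List A) (j k : ℕ) : per b (j + k) = per b j ++ per b k := by
  induction j with
  | zero => simp [per]
  | succ j ih => rw [show j + 1 + k = (j + k) + 1 by ring]; simp only [per]; rw [ih, List.append_assoc]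

lemma per_length {A : Type*} (b : List A) (k : ℕ) : (per b k).length = k * b.length := by
  induction k with
  | zero => simp [per]
  | succ j ih => simp only [per, List.length_append, ih]; ring

lemma sum_mv {n : ℕ} (m : Matching n) (y : Fin n → ℝ) : ∑ u, mv m y u = ∑ u, y u := by
  unfold mv; rw [← Finset.sum_div, Finset.sum_add_distrib, sum_inv]; ring

lemma sum_Bv {n : ℕ} (l : List (Matching n)) (y : Fin n → ℝ) : ∑ u, Bv l y u = ∑ u, y u := by
  induction l with
  | nil => rfl
  | cons m l ih => simp only [Bv]; rw [sum_mv, ih]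

lemma matrix_mv {n : ℕ} (m : Matching n) (y : Fin n → ℝ) : m.matrix.mulVec y = mv m y := by
  funext u
  unfold Matching.matrix mv Matrix.mulVec dotProduct
  simp only [Matrix.of_apply]
  by_cases h : m.f u = u
  · simp [h]
  · simp only [h, if_false]
    have : ∀ v, (if v = u ∨ v = m.f u then (1:ℝ)/2 else 0) * y v =
      (if v = u then y v / 2 else 0) + (if v = m.f u then y v / 2 else 0) := by
      intro v
      by_cases h1 : v = u
      · have : u ≠ m.f u := fun h' => h h'.symm
        subst h1
        simp [this]; ring
      · by_cases h2 : v = m.f u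
        · simp [h2, h]; ring
        · simp [h1, h2]
    simp only [this, Finset.sum_add_distrib, Finset.sum_ite_eq', Finset.mem_univ, if_true]
    ring

lemma prod_Bv {n : ℕ} (l : List (Matching n)) (y : Fin n → ℝ) :
    ((l.map Matching.matrix).prod).mulVec y = Bv l y := by
  induction l with
  | nil => simp [Bv]
  | cons m l ih => simp only [List.map_cons, List.prod_cons, Bv]; rw [← Matrix.mulVec_mulVec, ih, matrix_mv]

lemma round_Bv {n d : ℕ} (Ms : Fin d → Matching n) (y : Fin n → ℝ) :
    (roundMatrix Ms).mulVec y = Bv (List.ofFn Ms) y := by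
  rw [← prod_Bv, List.map_ofFn]; rfl

lemma lam_nonneg {n : ℕ} (M : Matrix (Fin n) (Fin n) ℝ) : 0 ≤ lamMax M :=
  Real.iSup_nonneg fun _ => Real.sqrt_nonneg _

lemma nsq_nonneg {n : ℕ} (y : Fin n → ℝ) : 0 ≤ nsq y := Finset.sum_nonneg fun _ _ => sq_nonneg _

lemma nsq_base {n d : ℕ} (Ms : Fin d → Matching n) (y : Fin n → ℝ) (hy : ∑ u, y u = 0) :
    nsq (Bv (List.ofFn Ms) y) ≤ (lamMax (roundMatrix Ms)) ^ 2 * nsq y := by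
  rcases (nsq_nonneg y).eq_or_lt with h | h
  · have := nsq_Bv_le (List.ofFn Ms) y
    rw [← h] at this ⊢; linarith
  · set c := (Real.sqrt (nsq y))⁻¹ with hc
    have hc2 : c ^ 2 * nsq y = 1 := by
      rw [hc, inv_pow, Real.sq_sqrt h.le]; field_simp
    have h1 : (∑ u, (fun u => c * y u) u) = 0 := by simp only []; rw [← Finset.mul_sum, hy, mul_zero]
    have h2 : (∑ u, ((fun u => c * y u) u) ^ 2) = 1 := by
      have := nsq_smul c y; rw [hc2] at this; exact this
    have hb : BddAbove (Set.range fun x : {x : Fin n → ℝ // (∑ u, x u) = 0 ∧ (∑ u, (x u) ^ 2) = 1} =>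
      Real.sqrt (∑ u, ((roundMatrix Ms).mulVec x.1 u) ^ 2)) := by
      refine ⟨1, ?_⟩
      rintro _ ⟨x, rfl⟩
      refine Real.sqrt_le_one.2 ?_
      rw [round_Bv]
      exact (nsq_Bv_le _ x.1).trans x.2.2.le
    have h3 := le_ciSup hb ⟨_, h1, h2⟩
    simp only [round_Bv] at h3
    have h4 : nsq (Bv (List.ofFn Ms) (fun u => c * y u)) ≤ (lamMax (roundMatrix Ms)) ^ 2 := by
      have := Real.sqrt_le_left (lam_nonneg (roundMatrix Ms)) |>.1 (le_trans h3 (le_of_eq (by unfold lamMax; simp only [round_Bv])))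
      exact this
    rw [Bv_smul, nsq_smul] at h4
    have h5 := mul_le_mul_of_nonneg_right h4 h.le
    calc _ = c ^ 2 * nsq y * nsq (Bv (List.ofFn Ms) y) := by rw [hc2, one_mul]
      _ ≤ _ := by linarith

lemma nsq_per {n d : ℕ} (Ms : Fin d → Matching n) (y : Fin n → ℝ) (hy : ∑ u, y u = 0) (k : ℕ) :
    nsq (Bv (per (List.ofFn Ms) k) y) ≤ (lamMax (roundMatrix Ms) ^ k) ^ 2 * nsq y := by
  induction k with
  | zero => simp [per, Bv]
  | succ k ih =>
    simp only [per]; rw [Bv_append]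
    refine (nsq_base Ms _ (by rw [sum_Bv, hy])).trans ?_
    refine (mul_le_mul_of_nonneg_left ih (sq_nonneg _)).trans (le_of_eq ?_)
    ring

lemma lam_pow {n : ℕ} (M : Matrix (Fin n) (Fin n) ℝ) (k : ℕ) :
    lamMax M ^ k ≤ Real.exp (-((1 - lamMax M) * k)) := by
  have h : lamMax M ≤ Real.exp (-(1 - lamMax M)) := by
    have := Real.add_one_le_exp (-(1 - lamMax M)); linarith
  refine (pow_le_pow_left₀ (lam_nonneg M) h k).trans (le_of_eq ?_)
  rw [← Real.exp_nat_mul]; congr 1; ring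

lemma Bv_fixed {n : ℕ} (l : List (Matching n)) (y : Fin n → ℝ) (h : ∀ m ∈ l, mv m y = y) : Bv l y = y := by
  induction l with
  | nil => rfl
  | cons m l ih =>
    simp only [Bv]
    rw [ih fun m' hm' => h m' (List.mem_cons_of_mem _ hm')]
    exact h m (List.mem_cons_self)

lemma cut {n d : ℕ} (Ms : Fin d → Matching n) (hl : lamMax (roundMatrix Ms) < 1) (S : Finset (Fin n))
    (a : Fin n) (ha : a ∈ S) (b : Fin n) (hb : b ∉ S) :
    ∃ m ∈ List.ofFn Ms, ∃ u ∈ S, m.f u ∉ S := by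
  by_contra hcon
  push Not at hcon
  have hn : (n : ℝ) ≠ 0 := by
    have : 0 < n := a.pos
    positivity
  let y : Fin n → ℝ := fun u => (if u ∈ S then 1 else 0) - (S.card : ℝ) / n
  have hy : ∑ u, y u = 0 := by
    simp only [y, Finset.sum_sub_distrib]
    simp; field_simp; simp
  have hf : Bv (List.ofFn Ms) y = y := by
    refine Bv_fixed _ _ fun m hm => ?_
    funext u
    have h1 : (m.f u ∈ S) ↔ u ∈ S := by
      constructor
      · intro h; have := hcon m hm _ h; rwa [m.invol] at this
      · exact hcon m hm u
    simp only [mv, y, h1]; ring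
  have h1 := nsq_base Ms y hy
  rw [hf] at h1
  have h2 : 0 < nsq y := by
    rcases (nsq_nonneg y).eq_or_lt with h | h
    · exfalso
      have h3 := (Finset.sum_eq_zero_iff_of_nonneg (fun u _ => sq_nonneg (y u))).1 h.symm
      have ya : y a = 0 := by simpa using h3 a (Finset.mem_univ _)
      have yb : y b = 0 := by simpa using h3 b (Finset.mem_univ _)
      simp only [y, ha, hb, if_true, if_false] at ya yb
      linarith
    · exact h
  have h0 := lam_nonneg (roundMatrix Ms)
  have : lamMax (roundMatrix Ms) ^ 2 < 1 := by nlinarith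
  nlinarith

lemma mv_diff {n : ℕ} (m : Matching n) (z : Fin n → ℝ) (e : ℝ) (he : 0 ≤ e)
    (h : nsq z - nsq (mv m z) ≤ e ^ 2 / 2) (u) : |z u - z (m.f u)| ≤ e := by
  refine abs_le_of_sq_le_sq ?_ he
  by_cases hu : m.f u = u
  · rw [hu]; simp; positivity
  · rw [nsq_mv] at h
    have h1 : ∑ v ∈ {u, m.f u}, (z v - z (m.f v)) ^ 2 / 4 ≤ ∑ v, (z v - z (m.f v)) ^ 2 / 4 :=
      Finset.sum_le_sum_of_subset_of_nonneg (Finset.subset_univ _) fun _ _ _ => by positivity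
    rw [Finset.sum_pair (fun h => hu h.symm), m.invol] at h1
    nlinarith

lemma energy {n : ℕ} (l : List (Matching n)) (y : Fin n → ℝ) (e : ℝ) (he : 0 ≤ e)
    (h : nsq y - nsq (Bv l y) ≤ e ^ 2 / 2) :
    (∀ u, |Bv l y u - y u| ≤ l.length * e / 2) ∧
    ∀ m ∈ l, ∀ u, |y u - y (m.f u)| ≤ (l.length + 1) * e := by
  induction l with
  | nil => constructor
           · intro u; simp [Bv]
           · intro m hm; simp at hm
  | cons m l ih =>
    simp only [Bv] at h
    have h1 := nsq_mv_le m (Bv l y)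
    have h2 := nsq_Bv_le l y
    obtain ⟨i1, i2⟩ := ih (by linarith)
    have h3 := mv_diff m (Bv l y) e he (by linarith)
    constructor
    · intro u
      have h4 := h3 u; have h5 := i1 u
      simp only [Bv, mv, List.length_cons]
      push_cast
      rw [abs_le] at *
      constructor <;> linarith
    · intro m' hm' u
      simp only [List.length_cons]
      push_cast
      rcases List.mem_cons.1 hm' with rfl | hm'
      · have h4 := h3 u; have h5 := i1 u; have h6 := i1 (m'.f u)
        rw [abs_le] at *
        constructor <;> nlinarith
      · have := i2 m' hm' u
        linarith

lemma chain {n d : ℕ} (Ms : Fin d → Matching n) (hl : lamMax (roundMatrix Ms) < 1) (y : Fin n → ℝ)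
    (η : ℝ) (hη : 0 ≤ η) (h : ∀ m ∈ List.ofFn Ms, ∀ u, |y u - y (m.f u)| ≤ η) (u0 : Fin n) (k : ℕ) :
    (∃ v, y v < y u0 - k * η) → k + 1 ≤ (Finset.univ.filter fun v => y u0 - k * η ≤ y v).card := by
  induction k with
  | zero =>
    intro _
    rw [zero_add, Nat.one_le_iff_ne_zero, ← Nat.pos_iff_ne_zero, Finset.card_pos]
    exact ⟨u0, by simp⟩
  | succ k ih =>
    rintro ⟨v, hv⟩
    push_cast at hv ⊢
    have hv' : y v < y u0 - k * η := by linarith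
    have h1 := ih ⟨v, hv'⟩
    obtain ⟨m, hm, u, hu, hmu⟩ := cut Ms hl (Finset.univ.filter fun v => y u0 - k * η ≤ y v) u0
      (by simp; positivity) v (by simp only [Finset.mem_filter, Finset.mem_univ, true_and, not_le]; exact hv')
    have h2 : (Finset.univ.filter fun v => y u0 - k * η ≤ y v) ⊂ (Finset.univ.filter fun v => y u0 - (k + 1) * η ≤ y v) := by
      rw [Finset.ssubset_iff_of_subset]
      · refine ⟨m.f u, ?_, hmu⟩
        have h3 := h m hm u
        rw [abs_le] at h3
        simp only [Finset.mem_filter, Finset.mem_univ, true_and] at hu ⊢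
        linarith
      · intro w hw
        simp only [Finset.mem_filter, Finset.mem_univ, true_and] at hw ⊢
        linarith
    have := Finset.card_lt_card h2
    omega

lemma gap {n d : ℕ} (hn : 0 < n) (Ms : Fin d → Matching n) (hl : lamMax (roundMatrix Ms) < 1) :
    1 / (4 * (d + 1) ^ 2 * (n : ℝ) ^ 3) ≤ 1 - lamMax (roundMatrix Ms) := by
  have hn1 : (1 : ℝ) ≤ n := by exact_mod_cast hn
  have hn3 : (1 : ℝ) ≤ (n : ℝ) ^ 3 := one_le_pow₀ hn1
  set δ0 : ℝ := 1 / (2 * (d + 1) ^ 2 * (n : ℝ) ^ 3) with hδ0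
  have hD : (1 : ℝ) ≤ (d + 1) ^ 2 := by nlinarith [(Nat.cast_nonneg d : (0:ℝ) ≤ d)]
  have hδ1 : δ0 ≤ 1 / 2 := by
    rw [hδ0]
    apply div_le_div_of_nonneg_left (by norm_num) (by norm_num)
    nlinarith
  have hδp : 0 < δ0 := by positivity
  suffices lamMax (roundMatrix Ms) ≤ 1 - δ0 / 2 by
    have h4 : 1 / (4 * (d + 1) ^ 2 * (n : ℝ) ^ 3) = δ0 / 2 := by rw [hδ0]; field_simp; norm_num
    rw [h4]; linarith
  refine Real.iSup_le ?_ (by linarith)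
  rintro ⟨y, hy0, hy1⟩
  simp only [round_Bv]
  rw [Real.sqrt_le_left (by linarith)]
  change nsq (Bv _ y) ≤ _
  change nsq y = 1 at hy1
  set δ := nsq y - nsq (Bv (List.ofFn Ms) y) with hδ
  have hδn : 0 ≤ δ := by have := nsq_Bv_le (List.ofFn Ms) y; linarith
  set e := Real.sqrt (2 * δ) with he
  have he2 : e ^ 2 = 2 * δ := Real.sq_sqrt (by positivity)
  have hen : 0 ≤ e := Real.sqrt_nonneg _
  obtain ⟨-, h2⟩ := energy (List.ofFn Ms) y e hen (by rw [he2]; linarith)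
  rw [List.length_ofFn] at h2
  set η := (d + 1) * e with hη
  have hηn : 0 ≤ η := by positivity
  have hdiff : ∀ u v, y u - n * η ≤ y v := by
    intro u v
    by_contra hc
    have := chain Ms hl y η hηn h2 u n ⟨v, not_le.1 hc⟩
    have h3 := Finset.card_le_univ (Finset.univ.filter fun v => y u - n * η ≤ y v)
    rw [Fintype.card_fin] at h3
    omega
  have habs : ∀ u, |y u| ≤ n * η := by
    intro u
    rw [abs_le]
    constructor
    · obtain ⟨v, -, hv⟩ := Finset.exists_le_of_sum_le (s := Finset.univ) (f := fun _ : Fin n => (0:ℝ)) (g := y) ⟨u, Finset.mem_univ _⟩ (by rw [hy0]; simp)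
      have := hdiff v u
      linarith
    · obtain ⟨v, -, hv⟩ := Finset.exists_le_of_sum_le (s := Finset.univ) (g := fun _ : Fin n => (0:ℝ)) (f := y) ⟨u, Finset.mem_univ _⟩ (by rw [hy0]; simp)
      have := hdiff u v
      linarith
  have hsum : nsq y ≤ n * (n * η) ^ 2 := by
    unfold nsq
    refine (Finset.sum_le_sum fun u _ => sq_le_sq' (by have := abs_le.1 (habs u); linarith) (abs_le.1 (habs u)).2).trans ?_
    simp
  rw [hy1] at hsum
  have hfin : 1 ≤ (2 * (d + 1) ^ 2 * (n : ℝ) ^ 3) * δ := by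
    calc (1:ℝ) ≤ n * (n * η) ^ 2 := hsum
      _ = n ^ 3 * ((d + 1) ^ 2 * e ^ 2) := by rw [hη]; ring
      _ = _ := by rw [he2]; ring
  have : δ0 ≤ δ := by
    rw [hδ0, div_le_iff₀ (by positivity)]; linarith
  nlinarith

lemma heat_step {n d : ℕ} (Ms : Fin d → Matching n) (hl : lamMax (roundMatrix Ms) < 1) (J : ℕ) (hJ : 1 ≤ J)
    (hn : 3 * J ^ 2 < n) (y : Fin n → ℝ) (hy : ∀ u, 0 ≤ y u) (hy1 : ∑ u, y u = 1)
    (hq : 1 / (J : ℝ) ^ 2 < nsq y) :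
    nsq (Bv (List.ofFn Ms) y) ≤ nsq y - 1 / (72 * (d + 1) ^ 2 * (J : ℝ) ^ 8) := by
  by_contra hcon
  push Not at hcon
  have hJ' : (1 : ℝ) ≤ J := by exact_mod_cast hJ
  have hJ0 : (0 : ℝ) < J := by linarith
  set a : ℝ := 1 / (J : ℝ) ^ 2 with ha
  have hap : 0 < a := by positivity
  have haJ : a * J ^ 2 = 1 := by rw [ha]; field_simp
  set e : ℝ := a ^ 2 / 6 / (d + 1) with he
  have hen : 0 ≤ e := by positivity
  have he2 : e ^ 2 / 2 = 1 / (72 * (d + 1) ^ 2 * (J : ℝ) ^ 8) := by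
    rw [he, ha]; field_simp; norm_num
  obtain ⟨-, h2⟩ := energy (List.ofFn Ms) y e hen (by rw [he2]; linarith)
  rw [List.length_ofFn] at h2
  have hη : ((d : ℝ) + 1) * e = a ^ 2 / 6 := by rw [he]; field_simp
  rw [hη] at h2
  have hn0 : 0 < n := by omega
  have : Nonempty (Fin n) := ⟨⟨0, hn0⟩⟩
  obtain ⟨u0, hu0⟩ := Finite.exists_max y
  have hs0 : a < y u0 := by
    refine hq.trans_le ?_
    calc nsq y ≤ ∑ u, y u0 * y u := Finset.sum_le_sum fun u _ => by
            rw [sq]; exact mul_le_mul_of_nonneg_right (hu0 u) (hy u)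
      _ = y u0 := by rw [← Finset.mul_sum, hy1, mul_one]
  have hk : ((2 * J ^ 2 : ℕ) : ℝ) * (a ^ 2 / 6) = a / 3 := by
    push_cast
    linear_combination a / 3 * haJ
  have hch := chain Ms hl y (a ^ 2 / 6) (by positivity) h2 u0 (2 * J ^ 2)
  rw [hk] at hch
  by_cases hex : ∃ v, y v < y u0 - a / 3
  · have h3 := hch hex
    have h4 : ((2 * J ^ 2 + 1 : ℕ) : ℝ) * (2 * a / 3) ≤ 1 := by
      calc ((2 * J ^ 2 + 1 : ℕ) : ℝ) * (2 * a / 3) ≤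
          ((Finset.univ.filter fun v => y u0 - a / 3 ≤ y v).card : ℝ) * (2 * a / 3) :=
            mul_le_mul_of_nonneg_right (by exact_mod_cast h3) (by positivity)
        _ = ∑ v ∈ (Finset.univ.filter fun v => y u0 - a / 3 ≤ y v), (2 * a / 3) := by simp
        _ ≤ ∑ v ∈ (Finset.univ.filter fun v => y u0 - a / 3 ≤ y v), y v := by
            refine Finset.sum_le_sum fun v hv => ?_
            simp only [Finset.mem_filter, Finset.mem_univ, true_and] at hv
            linarith
        _ ≤ ∑ v, y v := Finset.sum_le_sum_of_subset_of_nonneg (Finset.subset_univ _) fun _ _ _ => hy _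
        _ = 1 := hy1
    push_cast at h4
    nlinarith
  · push Not at hex
    have h4 : (n : ℝ) * (2 * a / 3) ≤ 1 := by
      calc (n : ℝ) * (2 * a / 3) = ∑ v : Fin n, (2 * a / 3) := by simp
        _ ≤ ∑ v, y v := Finset.sum_le_sum fun v _ => by have := hex v; linarith
        _ = 1 := hy1
    have h5 : ((3 * J ^ 2 : ℕ) : ℝ) ≤ n := by exact_mod_cast hn.le
    push_cast at h5
    nlinarith

lemma heat {n d : ℕ} (Ms : Fin d → Matching n) (hl : lamMax (roundMatrix Ms) < 1) (J : ℕ) (hJ : 1 ≤ J)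
    (hn : 3 * J ^ 2 < n) (hJ2 : 72 * (d + 1) ^ 2 * (J : ℝ) ^ 8 < 2 ^ J)
    (y : Fin n → ℝ) (hy : ∀ u, 0 ≤ y u) (hy1 : ∑ u, y u = 1) (hq : nsq y ≤ 1) (k : ℕ) (hk : 2 ^ J ≤ k) :
    nsq (Bv (per (List.ofFn Ms) k) y) ≤ 1 / (J : ℝ) ^ 2 := by
  have key : ∀ k : ℕ, nsq (Bv (per (List.ofFn Ms) k) y) ≤ 1 / (J : ℝ) ^ 2 ∨
      nsq (Bv (per (List.ofFn Ms) k) y) ≤ 1 - k * (1 / (72 * (d + 1) ^ 2 * (J : ℝ) ^ 8)) := by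
    intro k
    induction k with
    | zero => right; simpa [per, Bv] using hq
    | succ k ih =>
      simp only [per]; rw [Bv_append]
      by_cases h : nsq (Bv (per (List.ofFn Ms) k) y) ≤ 1 / (J : ℝ) ^ 2
      · left; exact (nsq_Bv_le _ _).trans h
      · right
        have h1 := heat_step Ms hl J hJ hn _ (Bv_nonneg (per (List.ofFn Ms) k) hy) (by rw [sum_Bv, hy1]) (not_le.1 h)
        rcases ih with ih | ih
        · exact absurd ih h
        · push_cast; linarith
  rcases key k with h | h
  · exact h
  · exfalso
    have h1 := nsq_nonneg (Bv (per (List.ofFn Ms) k) y)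
    have hJ' : (0 : ℝ) < J := by exact_mod_cast hJ
    set E := 72 * ((d:ℝ) + 1) ^ 2 * (J : ℝ) ^ 8 with hE
    have hE0 : 0 < E := by positivity
    have h2 : (2:ℝ) ^ J ≤ k := by exact_mod_cast hk
    have : 1 < (k : ℝ) * (1 / E) := by
      rw [mul_one_div, lt_div_iff₀ hE0]; linarith
    linarith



def ew {n : ℕ} (w : Fin n) : Fin n → ℝ := fun u => if u = w then 1 else 0

noncomputable def qv {n : ℕ} (b : List (Matching n)) (k : ℕ) (w : Fin n) : Fin n → ℝ := Bv (per b k) (ew w)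

noncomputable def Sj {n : ℕ} (b : List (Matching n)) (β : ℝ) (k : ℕ) (u : Fin n) (x : Fin n → ℤ) : ℝ :=
  ∑ w, qv b k w u * Real.exp (β * (dt (qv b k w) (cx x) - 1))

noncomputable def SS {n : ℕ} (b : List (Matching n)) (J Δ Δ1 : ℕ) (β : ℝ) (u : Fin n) (x : Fin n → ℤ) : ℝ :=
  ∑ j ∈ Finset.range J, Sj b β (Δ + (j + 1) * Δ1) u x

structure Hyp {n : ℕ} (b : List (Matching n)) (J Δ Δ1 : ℕ) (β γ : ℝ) : Prop where
  hn : 0 < n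
  hb : b ≠ []
  hJ : 1 ≤ J
  hD1 : 1 ≤ Δ1
  heat : ∀ k ≥ Δ1, ∀ w, nsq (qv b k w) ≤ 1 / (J : ℝ) ^ 2
  con : ∀ k ≥ Δ, ∀ y : Fin n → ℝ, ∑ u, y u = 0 → nsq (Bv (per b k) y) * β ^ 2 ≤ nsq y
  hβ : (J : ℝ) ≤ β
  hβ2 : 2 ≤ β
  hγ : γ + J ≤ β
  hγ2 : γ = ((Δ + J * Δ1) * b.length : ℕ) * ((J : ℝ) - 3)

lemma ew_nonneg {n : ℕ} (w u : Fin n) : 0 ≤ ew w u := by unfold ew; split_ifs <;> norm_num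

lemma qv_nonneg {n : ℕ} (b : List (Matching n)) (k : ℕ) (w u : Fin n) : 0 ≤ qv b k w u :=
  Bv_nonneg _ (ew_nonneg w) u

lemma sum_ew {n : ℕ} (w : Fin n) : ∑ u, ew w u = 1 := by unfold ew; simp

lemma nsq_ew {n : ℕ} (w : Fin n) : nsq (ew w) = 1 := by unfold ew nsq; simp

lemma Bv_sum_fn {n : ℕ} {ι : Type*} (s : Finset ι) (l : List (Matching n)) (y : ι → Fin n → ℝ) :
    Bv l (fun u => ∑ i ∈ s, y i u) = fun u => ∑ i ∈ s, Bv l (y i) u := by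
  induction l with
  | nil => rfl
  | cons m l ih =>
    simp only [Bv]; rw [ih]; funext u; unfold mv
    rw [← Finset.sum_add_distrib, Finset.sum_div]

lemma sum_qv {n : ℕ} (b : List (Matching n)) (k : ℕ) (u : Fin n) : ∑ w, qv b k w u = 1 := by
  have h := congrFun (Bv_sum_fn Finset.univ (per b k) (fun w : Fin n => ew w)) u
  have h1 : (fun u : Fin n => ∑ w, ew w u) = fun _ => 1 := by funext u; unfold ew; simp
  have h2 : Bv (per b k) (fun _ => (1:ℝ)) = fun _ => 1 :=
    Bv_fixed _ _ fun m _ => by funext u; unfold mv; norm_num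
  rw [h1, h2] at h
  exact h.symm

lemma qv_add {n : ℕ} (b : List (Matching n)) (j k : ℕ) (w : Fin n) :
    Bv (per b j) (qv b k w) = qv b (j + k) w := by
  unfold qv; rw [per_add, Bv_append]

lemma dt_ew {n : ℕ} (w : Fin n) (z : Fin n → ℝ) : dt (ew w) z = z w := by unfold dt ew; simp

lemma Sj_nonneg {n : ℕ} (b : List (Matching n)) (β : ℝ) (k : ℕ) (u x) : 0 ≤ Sj b β k u x :=
  Finset.sum_nonneg fun w _ => mul_nonneg (qv_nonneg b k w u) (Real.exp_pos _).le

lemma SS_nonneg {n : ℕ} (b : List (Matching n)) (J Δ Δ1 : ℕ) (β : ℝ) (u x) : 0 ≤ SS b J Δ Δ1 β u x :=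
  Finset.sum_nonneg fun _ _ => Sj_nonneg b β _ u x

lemma exp_aux (s β1 β z : ℝ) (h : 0 ≤ β1) (hβ : β1 ≤ β) :
    Real.exp (β1 * z) ≤ Real.exp (β1 * s) * (1 + Real.exp (β * (z - s))) := by
  have e : Real.exp (β1 * z) = Real.exp (β1 * s) * Real.exp (β1 * (z - s)) := by
    rw [← Real.exp_add]; congr 1; ring
  rw [e]
  refine mul_le_mul_of_nonneg_left ?_ (Real.exp_pos _).le
  rcases le_total z s with hz | hz
  · have : Real.exp (β1 * (z - s)) ≤ 1 := Real.exp_le_one_iff.2 (by nlinarith)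
    have := Real.exp_pos (β * (z - s)); linarith
  · have : Real.exp (β1 * (z - s)) ≤ Real.exp (β * (z - s)) := Real.exp_le_exp.2 (by nlinarith)
    linarith

lemma per_ne {A : Type*} (b : List A) (hb : b ≠ []) (k : ℕ) (hk : 1 ≤ k) : per b k ≠ [] := by
  obtain ⟨j, rfl⟩ := Nat.exists_eq_add_of_le' hk
  simp [per, hb]

noncomputable def XX {n : ℕ} (b : List (Matching n)) (β1 : ℝ) (k : ℕ) (u : Fin n) (x : Fin n → ℤ) : ℝ :=
  ∑ w, qv b k w u * Real.exp (β1 * dt (qv b k w) (cx x))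

section
variable {n : ℕ} {b : List (Matching n)} {J Δ Δ1 : ℕ} {β γ : ℝ}

lemma L1 (H : Hyp b J Δ Δ1 β γ) (u x) :
    Ll (per b Δ1) (fun _ _ => 1) u x ≤
      Real.exp (-1) * (1 + Real.exp (-(2 * J)) * XX b J Δ1 u x) := by
  have hJ : (1 : ℝ) ≤ J := by exact_mod_cast H.hJ
  have h1 := Ll_mono' (per b Δ1) (per_ne b H.hb Δ1 H.hD1) (F := fun _ _ => 1)
    (F' := fun u x => Real.exp (-3) * ∑ w, Ft 1 (ew w) u x) (by
      intro u x hx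
      have h5 : 5 < cx x u := by
        unfold hh at hx
        rcases lt_max_iff.1 hx with h | h
        · linarith
        · exact absurd h (lt_irrefl _)
      have h6 : Ft 1 (ew u) u x ≤ ∑ w, Ft 1 (ew w) u x :=
        Finset.single_le_sum (f := fun w => Ft 1 (ew w) u x)
          (fun w _ => Ft_nonneg 1 (ew_nonneg w) u x) (Finset.mem_univ u)
      have h7 : Ft 1 (ew u) u x = Real.exp (cx x u - 2) := by
        unfold Ft; rw [dt_ew, nsq_ew]; simp only [ew, if_true]; rw [one_mul]; congr 1; ring
      have h8 : 1 ≤ Real.exp (-3) * Real.exp (cx x u - 2) := by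
        rw [← Real.exp_add]; exact Real.one_le_exp (by linarith)
      refine h8.trans (mul_le_mul_of_nonneg_left ?_ (Real.exp_pos _).le)
      rw [← h7]; exact h6) u x
  refine h1.trans ?_
  rw [Ll_mul, Ll_sum]
  have h2 : ∀ w, Ll (per b Δ1) (Ft 1 (ew w)) u x ≤ Real.exp 2 * (qv b Δ1 w u + Real.exp (-(2 * J)) * (qv b Δ1 w u * Real.exp (J * dt (qv b Δ1 w) (cx x)))) := by
    intro w
    refine (Ll_Ft (per b Δ1) zero_le_one (ew_nonneg w) u x).trans ?_
    change Ft 1 (qv b Δ1 w) u x ≤ _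
    unfold Ft
    have hq := qv_nonneg b Δ1 w u
    have h3 : Real.exp (1 * (dt (qv b Δ1 w) (cx x) - qv b Δ1 w u) - 1 ^ 2 * nsq (qv b Δ1 w)) ≤
       Real.exp (1 * dt (qv b Δ1 w) (cx x)) := Real.exp_le_exp.2 (by have := nsq_nonneg (qv b Δ1 w); linarith)
    have h4 := h3.trans (exp_aux 2 1 J _ zero_le_one hJ)
    refine (mul_le_mul_of_nonneg_left h4 hq).trans (le_of_eq ?_)
    rw [show (J:ℝ) * (dt (qv b Δ1 w) (cx x) - 2) = -(2 * J) + J * dt (qv b Δ1 w) (cx x) by ring, Real.exp_add, one_mul]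
    ring
  refine (mul_le_mul_of_nonneg_left (Finset.sum_le_sum fun w _ => h2 w) (Real.exp_pos _).le).trans (le_of_eq ?_)
  rw [← Finset.mul_sum, Finset.sum_add_distrib, sum_qv, ← Finset.mul_sum, ← mul_assoc, ← Real.exp_add]
  norm_num [XX]

lemma L2 (H : Hyp b J Δ Δ1 β γ) (k : ℕ) (u x) :
    Ll (per b k) (XX b J Δ1) u x ≤ Real.exp (2 + J) * (1 + Sj b β (k + Δ1) u x) := by
  have hJ : (1 : ℝ) ≤ J := by exact_mod_cast H.hJ
  have h1 : ∀ u x, XX b J Δ1 u x ≤ Real.exp 2 * ∑ w, Ft J (qv b Δ1 w) u x := by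
    intro u x
    unfold XX
    rw [Finset.mul_sum]
    refine Finset.sum_le_sum fun w _ => ?_
    unfold Ft
    rw [mul_left_comm, ← Real.exp_add]
    refine mul_le_mul_of_nonneg_left (Real.exp_le_exp.2 ?_) (qv_nonneg b Δ1 w u)
    have h2 := H.heat Δ1 le_rfl w
    have h3 : (J:ℝ) ^ 2 * nsq (qv b Δ1 w) ≤ 1 := by
      rw [le_div_iff₀ (by positivity)] at h2; linarith
    have h4 : (qv b Δ1 w u) ^ 2 ≤ nsq (qv b Δ1 w) :=
      Finset.single_le_sum (f := fun u => (qv b Δ1 w u) ^ 2) (fun _ _ => sq_nonneg _) (Finset.mem_univ u)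
    have h5 : J * qv b Δ1 w u ≤ 1 := by
      have : (J * qv b Δ1 w u) ^ 2 ≤ 1 := by rw [mul_pow]; nlinarith
      nlinarith [qv_nonneg b Δ1 w u]
    linarith
  refine (Ll_mono (per b k) h1 u x).trans ?_
  rw [Ll_mul, Ll_sum]
  have h2 : ∀ w, Ll (per b k) (Ft J (qv b Δ1 w)) u x ≤ Real.exp J * (qv b (k + Δ1) w u + qv b (k + Δ1) w u * Real.exp (β * (dt (qv b (k + Δ1) w) (cx x) - 1))) := by
    intro w
    refine (Ll_Ft (per b k) (by positivity) (qv_nonneg b Δ1 w) u x).trans ?_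
    rw [qv_add]
    unfold Ft
    have hq := qv_nonneg b (k + Δ1) w u
    have h3 : Real.exp (J * (dt (qv b (k + Δ1) w) (cx x) - qv b (k + Δ1) w u) - J ^ 2 * nsq (qv b (k + Δ1) w)) ≤
       Real.exp (J * dt (qv b (k + Δ1) w) (cx x)) := Real.exp_le_exp.2 (by
        have := nsq_nonneg (qv b (k + Δ1) w)
        have h6 : 0 ≤ (J:ℝ) * qv b (k + Δ1) w u := by positivity
        have h7 : 0 ≤ (J:ℝ) ^ 2 * nsq (qv b (k + Δ1) w) := by positivity
        linarith)
    have h4 := h3.trans (exp_aux 1 J β _ (by positivity) H.hβ)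
    refine (mul_le_mul_of_nonneg_left h4 hq).trans (le_of_eq ?_)
    rw [mul_one]; ring
  refine (mul_le_mul_of_nonneg_left (Finset.sum_le_sum fun w _ => h2 w) (Real.exp_pos _).le).trans (le_of_eq ?_)
  rw [← Finset.mul_sum, Finset.sum_add_distrib, sum_qv, ← mul_assoc, ← Real.exp_add]
  rfl

lemma L3 (H : Hyp b J Δ Δ1 β γ) (u x) (hS : SS b J Δ Δ1 β u x ≤ 1) (j : ℕ) (hj : j ≤ J) :
    Ll (per b (Δ + j * Δ1)) (fun _ _ => 1) u x ≤ Real.exp (-j) + 4 * Real.exp (1 - J) := by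
  induction j with
  | zero =>
    have := Ll_one (per b (Δ + 0 * Δ1)) (F := fun _ _ => 1) (fun _ _ => le_rfl) u x
    have h2 := Real.exp_pos (1 - (J:ℝ))
    simp only [Nat.cast_zero, neg_zero, Real.exp_zero]
    linarith
  | succ j ih =>
    have ih := ih (by omega)
    have e1 : Δ + (j + 1) * Δ1 = (Δ + j * Δ1) + Δ1 := by ring
    have h1 : Ll (per b (Δ + (j + 1) * Δ1)) (fun _ _ => 1) u x ≤
       Real.exp (-1) * (Ll (per b (Δ + j * Δ1)) (fun _ _ => 1) u x + Real.exp (-(2 * J)) * Ll (per b (Δ + j * Δ1)) (XX b J Δ1) u x) := by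
      rw [e1, per_add, Ll_append]
      refine (Ll_mono _ (L1 H) u x).trans (le_of_eq ?_)
      rw [Ll_mul, Ll_add, Ll_mul]
    have h2 := L2 H (Δ + j * Δ1) u x
    rw [← e1] at h2
    have h3 : Sj b β (Δ + (j + 1) * Δ1) u x ≤ 1 :=
      (Finset.single_le_sum (f := fun j => Sj b β (Δ + (j + 1) * Δ1) u x)
        (fun j _ => Sj_nonneg b β _ u x) (Finset.mem_range.2 (by omega : j < J))).trans hS
    have h4 : Ll (per b (Δ + j * Δ1)) (XX b J Δ1) u x ≤ Real.exp (2 + J) * 2 :=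
      h2.trans (mul_le_mul_of_nonneg_left (by linarith) (Real.exp_pos _).le)
    have h5 : Real.exp (-(2 * J)) * Ll (per b (Δ + j * Δ1)) (XX b J Δ1) u x ≤ 2 * Real.exp (2 - J) := by
      refine (mul_le_mul_of_nonneg_left h4 (Real.exp_pos _).le).trans (le_of_eq ?_)
      rw [← mul_assoc, ← Real.exp_add, mul_comm]; congr 2; ring
    refine h1.trans ((mul_le_mul_of_nonneg_left (add_le_add ih h5) (Real.exp_pos _).le).trans ?_)
    have e2 : Real.exp (2 - (J:ℝ)) = Real.exp 1 * Real.exp (1 - J) := by rw [← Real.exp_add]; congr 1; ring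
    have e3 : Real.exp (-((j + 1 : ℕ) : ℝ)) = Real.exp (-1) * Real.exp (-j) := by
      rw [← Real.exp_add]; congr 1; push_cast; ring
    have e4 : Real.exp (-1) * Real.exp 1 = 1 := by rw [← Real.exp_add]; simp
    rw [e2, e3]
    have e5 : 2 ≤ Real.exp 1 := by have := Real.add_one_le_exp 1; linarith
    have e6 : Real.exp (-1) ≤ 1 / 2 := by
      have := Real.exp_pos (-1); nlinarith
    have e7 := Real.exp_pos (1 - (J:ℝ))
    nlinarith

lemma L4 (H : Hyp b J Δ Δ1 β γ) (u x) (hS : SS b J Δ Δ1 β u x ≤ 1) :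
    Ll (per b (Δ + J * Δ1)) (fun _ _ => 1) u x ≤ Real.exp (3 - J) := by
  refine (L3 H u x hS J le_rfl).trans ?_
  have e2 : Real.exp (3 - (J:ℝ)) = Real.exp 1 * Real.exp 1 * Real.exp 1 * Real.exp (-J) := by
    rw [← Real.exp_add, ← Real.exp_add, ← Real.exp_add]; congr 1; ring
  have e3 : Real.exp (1 - (J:ℝ)) = Real.exp 1 * Real.exp (-J) := by
    rw [← Real.exp_add]; congr 1
  have e5 : 2.7 ≤ Real.exp 1 := by have := Real.exp_one_gt_d9; linarith
  rw [e2, e3]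
  have := Real.exp_pos (-(J:ℝ))
  have h : 1 + 4 * Real.exp 1 ≤ Real.exp 1 * Real.exp 1 * Real.exp 1 := by
    have : 7 ≤ Real.exp 1 * Real.exp 1 := by nlinarith
    nlinarith
  nlinarith

end


noncomputable def EE {n : ℕ} (l1 lb : List (Matching n)) (upd : (Fin n → ℤ) → (Fin n → ℝ) → (Fin n → ℝ))
    (x0 : Fin n → ℤ) : ℕ → ((Fin n → ℤ) → (Fin n → ℝ) → ℝ) → ℝ
  | 0, g => Pl l1 (fun x => g x (fun _ => 1)) x0
  | k + 1, g => EE l1 lb upd x0 k (fun x Z => Pl lb (fun x' => g x' (upd x Z)) x)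

section
variable {n : ℕ} {l1 lb : List (Matching n)} {upd : (Fin n → ℤ) → (Fin n → ℝ) → (Fin n → ℝ)}
  {x0 : Fin n → ℤ}

lemma EE_mono (hu : ∀ x Z, (∀ u, 0 < Z u) → ∀ u, 0 < upd x Z u) (k : ℕ) :
    ∀ {g g' : (Fin n → ℤ) → (Fin n → ℝ) → ℝ} (_ : ∀ x Z, (∀ u, 0 < Z u) → g x Z ≤ g' x Z),
    EE l1 lb upd x0 k g ≤ EE l1 lb upd x0 k g' := by
  induction k with
  | zero => intro g g' h; exact Pl_mono l1 (fun x => h x _ fun _ => one_pos) x0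
  | succ k ih =>
    intro g g' h
    exact ih fun x Z hZ => Pl_mono lb (fun x' => h x' _ (hu x Z hZ)) x

lemma EE_mul (c : ℝ) (k : ℕ) : ∀ (g : (Fin n → ℤ) → (Fin n → ℝ) → ℝ),
    EE l1 lb upd x0 k (fun x Z => c * g x Z) = c * EE l1 lb upd x0 k g := by
  induction k with
  | zero => intro g; exact Pl_mul l1 c _ x0
  | succ k ih =>
    intro g
    simp only [EE]
    rw [← ih]; congr 1; funext x Z; exact Pl_mul lb c _ x

lemma EE_add (k : ℕ) : ∀ (g g' : (Fin n → ℤ) → (Fin n → ℝ) → ℝ),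
    EE l1 lb upd x0 k (fun x Z => g x Z + g' x Z) = EE l1 lb upd x0 k g + EE l1 lb upd x0 k g' := by
  induction k with
  | zero => intro g g'; exact Pl_add l1 _ _ x0
  | succ k ih =>
    intro g g'
    simp only [EE]
    rw [← ih]; congr 1; funext x Z; exact Pl_add lb _ _ x

lemma EE_sum {ι : Type*} (s : Finset ι) (k : ℕ) : ∀ (g : ι → (Fin n → ℤ) → (Fin n → ℝ) → ℝ),
    EE l1 lb upd x0 k (fun x Z => ∑ i ∈ s, g i x Z) = ∑ i ∈ s, EE l1 lb upd x0 k (g i) := by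
  induction k with
  | zero => intro g; exact Pl_sum s l1 _ x0
  | succ k ih =>
    intro g
    simp only [EE]
    rw [← ih]; congr 1; funext x Z; exact Pl_sum s lb _ x

lemma per_succ' {A : Type*} (b : List A) (k : ℕ) : per b (k + 1) = per b k ++ b := by
  rw [per_add]; simp [per]

lemma EE_x (k : ℕ) : ∀ (f : (Fin n → ℤ) → ℝ),
    EE l1 lb upd x0 k (fun x _ => f x) = Pl (l1 ++ per lb k) f x0 := by
  induction k with
  | zero => intro f; simp [EE, per]
  | succ k ih =>
    intro f
    simp only [EE]
    rw [ih (Pl lb f), per_succ', ← List.append_assoc, Pl_append (l1 ++ per lb k)]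

end

lemma dt_ev {n : ℕ} (l : List (Matching n)) : ∀ (Z q : Fin n → ℝ), dt (ev l Z) q = dt Z (Bv l q) := by
  induction l with
  | nil => intro Z q; rfl
  | cons m l ih => intro Z q; simp only [ev, Bv]; rw [ih, dt_mv]

lemma ev_eq {n : ℕ} (l : List (Matching n)) (Z : Fin n → ℝ) (u : Fin n) :
    ev l Z u = ∑ v, Bv l (ew u) v * Z v := by
  have h := dt_ev l Z (ew u)
  have h1 : dt (ev l Z) (ew u) = ev l Z u := by unfold dt ew; simp
  rw [h1] at h; rw [h]; unfold dt
  exact Finset.sum_congr rfl fun v _ => mul_comm _ _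

noncomputable def up {n : ℕ} (b : List (Matching n)) (J Δ Δ1 : ℕ) (β γ : ℝ) (x : Fin n → ℤ) (Z : Fin n → ℝ) :
    Fin n → ℝ := ev (per b (Δ + J * Δ1)) (fun u => Z u * (1 + Real.exp γ * SS b J Δ Δ1 β u x))

lemma sum_cx {n : ℕ} (hn : 0 < n) (x : Fin n → ℤ) : ∑ u, cx x u = 0 := by
  unfold cx
  have : (n:ℝ) ≠ 0 := by positivity
  rw [Finset.sum_sub_distrib]; simp; field_simp; ring

section
variable {n : ℕ} {b : List (Matching n)} {J Δ Δ1 : ℕ} {β γ : ℝ} {l1 : List (Matching n)} {x0 : Fin n → ℤ}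

lemma W_pos (x : Fin n → ℤ) (Z : Fin n → ℝ) (hZ : ∀ u, 0 < Z u) (u) :
    0 < Z u * (1 + Real.exp γ * SS b J Δ Δ1 β u x) := by
  have := SS_nonneg b J Δ Δ1 β u x
  have := hZ u
  positivity

lemma up_pos (x : Fin n → ℤ) (Z : Fin n → ℝ) (hZ : ∀ u, 0 < Z u) (u) : 0 < up b J Δ Δ1 β γ x Z u :=
  ev_pos _ (W_pos x Z hZ) u

lemma EE_ii (H : Hyp b J Δ Δ1 β γ) (hJ3 : 3 ≤ J) (k : ℕ) :
    EE l1 (per b (Δ + J * Δ1)) (up b J Δ Δ1 β γ) x0 k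
      (fun x Z => ∑ u, hh x u * (Z u) ^ (-(1 / (((Δ + J * Δ1) * b.length : ℕ) : ℝ)))) ≤
      (2 * Real.exp (3 - J)) ^ k * ∑ u, hh x0 u := by
  set p : ℕ := (Δ + J * Δ1) * b.length with hp
  have hp0 : 0 < p := by
    have h1 := List.length_pos_iff.2 H.hb
    have h2 : 0 < Δ + J * Δ1 := by have := Nat.mul_pos (show 0 < J from H.hJ) H.hD1; omega
    exact Nat.mul_pos h2 h1
  have hpR : (0:ℝ) < p := by exact_mod_cast hp0
  set a : ℝ := 1 / (p : ℝ) with ha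
  have ha0 : 0 ≤ a := by positivity
  induction k with
  | zero =>
    simp only [EE, Real.one_rpow, pow_zero, one_mul]
    refine (Pl_hh l1 (F := fun _ _ => 1) (fun _ _ => zero_le_one) x0).trans ?_
    exact Finset.sum_le_sum fun u _ => by
      have := mul_le_mul_of_nonneg_left (Ll_one l1 (F := fun _ _ => 1) (fun _ _ => le_rfl) u x0) (hh_nonneg x0 u)
      linarith
  | succ k ih =>
    simp only [EE]
    have key : ∀ (x : Fin n → ℤ) (Z : Fin n → ℝ), (∀ u, 0 < Z u) →
      Pl (per b (Δ + J * Δ1)) (fun x' => ∑ u, hh x' u * (up b J Δ Δ1 β γ x Z u) ^ (-a)) x ≤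
      (2 * Real.exp (3 - J)) * ∑ u, hh x u * (Z u) ^ (-a) := by
      intro x Z hZ
      refine (Pl_hh (per b (Δ + J * Δ1)) (F := fun u _ => (up b J Δ Δ1 β γ x Z u) ^ (-a))
        (fun u _ => (Real.rpow_pos_of_pos (up_pos x Z hZ u) _).le) x).trans ?_
      rw [Finset.mul_sum]
      refine Finset.sum_le_sum fun u _ => ?_
      have h1 := Ll_Z (per b (Δ + J * Δ1)) (F := fun _ _ => 1) (fun _ _ => zero_le_one) ha0 _ (W_pos (b := b) (J := J) (Δ := Δ) (Δ1 := Δ1) (β := β) (γ := γ) x Z hZ) u x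
      have e1 : (2:ℝ) ^ (a * ((per b (Δ + J * Δ1)).length : ℝ)) = 2 := by
        rw [per_length, ← hp, ha, one_div_mul_cancel hpR.ne', Real.rpow_one]
      rw [e1] at h1
      simp only [one_mul] at h1
      rw [show (2 * Real.exp (3 - J)) * (hh x u * (Z u) ^ (-a)) = hh x u * (2 * (Z u) ^ (-a) * Real.exp (3 - J)) by ring]
      refine mul_le_mul_of_nonneg_left (h1.trans ?_) (hh_nonneg x u)
      have hS := SS_nonneg b J Δ Δ1 β u x
      set S := SS b J Δ Δ1 β u x with hSdef
      rw [Real.mul_rpow (hZ u).le (by positivity)]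
      have hZp := Real.rpow_pos_of_pos (hZ u) (-a)
      have hLn := Ll_nonneg (per b (Δ + J * Δ1)) (F := fun _ _ => 1) (fun _ _ => zero_le_one) u x
      have hmain : (1 + Real.exp γ * S) ^ (-a) * Ll (per b (Δ + J * Δ1)) (fun _ _ => 1) u x ≤ Real.exp (3 - J) := by
        by_cases hS1 : S ≤ 1
        · have h2 := L4 H u x hS1
          have h3 : (1 + Real.exp γ * S) ^ (-a) ≤ 1 :=
            Real.rpow_le_one_of_one_le_of_nonpos (by have : 0 ≤ Real.exp γ * S := by positivity
                                                     linarith) (by linarith)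
          calc _ ≤ 1 * Ll (per b (Δ + J * Δ1)) (fun _ _ => 1) u x := mul_le_mul_of_nonneg_right h3 hLn
            _ ≤ _ := by rw [one_mul]; exact h2
        · have h2 := Ll_one (per b (Δ + J * Δ1)) (F := fun _ _ => 1) (fun _ _ => le_rfl) u x
          have h3 : (1 + Real.exp γ * S) ^ (-a) ≤ Real.exp (3 - J) := by
            have h4 : Real.exp γ ≤ 1 + Real.exp γ * S := by
              have := Real.exp_pos γ; nlinarith
            refine (Real.rpow_le_rpow_of_nonpos (Real.exp_pos γ) h4 (by linarith)).trans (le_of_eq ?_)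
            rw [← Real.exp_mul]; congr 1
            rw [H.hγ2, ← hp, ha]; field_simp; ring
          calc _ ≤ (1 + Real.exp γ * S) ^ (-a) * 1 := mul_le_mul_of_nonneg_left h2 (by positivity)
            _ ≤ _ := by rw [mul_one]; exact h3
      calc _ = 2 * (Z u) ^ (-a) * ((1 + Real.exp γ * S) ^ (-a) * Ll (per b (Δ + J * Δ1)) (fun _ _ => 1) u x) := by ring
        _ ≤ _ := mul_le_mul_of_nonneg_left hmain (by positivity)
    refine (EE_mono (fun x Z hZ => up_pos x Z hZ) k key).trans ?_
    rw [EE_mul, pow_succ]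
    calc _ ≤ 2 * Real.exp (3 - J) * _ := mul_le_mul_of_nonneg_left ih (by positivity)
      _ = _ := by ring

lemma nsq_add_le (y z : Fin n → ℝ) : nsq (fun u => y u + z u) ≤ 2 * nsq y + 2 * nsq z := by
  unfold nsq; rw [Finset.mul_sum, Finset.mul_sum, ← Finset.sum_add_distrib]
  exact Finset.sum_le_sum fun u _ => by nlinarith [sq_nonneg (y u - z u)]

lemma dt_add (y z c : Fin n → ℝ) : dt (fun u => y u + z u) c = dt y c + dt z c := by
  unfold dt; rw [← Finset.sum_add_distrib]; exact Finset.sum_congr rfl fun u _ => by ring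

lemma Bv_sub (l : List (Matching n)) (y z : Fin n → ℝ) :
    Bv l (fun u => y u - z u) = fun u => Bv l y u - Bv l z u := by
  induction l with
  | nil => rfl
  | cons m l ih => simp only [Bv]; rw [ih]; funext u; unfold mv; ring

lemma dt_sub_const (hn : 0 < n) (y : Fin n → ℝ) (c : ℝ) (x : Fin n → ℤ) :
    dt (fun u => y u - c) (cx x) = dt y (cx x) := by
  unfold dt
  have : ∀ u, (y u - c) * cx x u = y u * cx x u - c * cx x u := fun u => by ring
  simp only [this, Finset.sum_sub_distrib, ← Finset.mul_sum, sum_cx hn, mul_zero, sub_zero]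

lemma qv_cent (H : Hyp b J Δ Δ1 β γ) (k : ℕ) (hk : Δ ≤ k) (w : Fin n) :
    nsq (fun u => qv b k w u - 1 / (n:ℝ)) * β ^ 2 ≤ 1 ∧ ∑ u, (qv b k w u - 1 / (n:ℝ)) = 0 := by
  have hn : (0:ℝ) < n := by exact_mod_cast H.hn
  have h2 : Bv (per b k) (fun _ : Fin n => 1 / (n:ℝ)) = fun _ => 1 / (n:ℝ) :=
    Bv_fixed _ _ fun m _ => by funext u; unfold mv; ring
  have h1 : (fun u => qv b k w u - 1 / (n:ℝ)) = Bv (per b k) (fun u => ew w u - 1 / (n:ℝ)) := by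
    rw [Bv_sub, h2]; rfl
  have h3 : ∑ u, (ew w u - 1 / (n:ℝ)) = 0 := by
    rw [Finset.sum_sub_distrib, sum_ew]; simp; field_simp; ring
  constructor
  · rw [h1]
    refine (H.con k hk _ h3).trans ?_
    unfold nsq
    have : ∀ u, (ew w u - 1 / (n:ℝ)) ^ 2 = (ew w u) ^ 2 - 2 / n * ew w u + (1 / (n:ℝ)) ^ 2 := fun u => by ring
    simp only [this, Finset.sum_add_distrib, Finset.sum_sub_distrib, ← Finset.mul_sum, sum_ew]
    have h4 := nsq_ew w
    unfold nsq at h4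
    rw [h4]; simp
    field_simp
    linarith
  · have := sum_Bv (per b k) (fun u => ew w u - 1 / (n:ℝ))
    rw [h3, ← h1] at this; exact this

lemma EE_i (H : Hyp b J Δ Δ1 β γ) 
    (hbase : ∀ y : Fin n → ℝ, ∑ u, y u = 0 → nsq y ≤ 4 → dt (Bv l1 y) (cx x0) ≤ 1) (k : ℕ) :
    ∀ (u : Fin n) (y : Fin n → ℝ), ∑ u, y u = 0 → nsq y ≤ 4 →
    EE l1 (per b (Δ + J * Δ1)) (up b J Δ Δ1 β γ) x0 k
      (fun x Z => Z u * Real.exp (dt y (cx x))) ≤ Real.exp (2 + 2 * k) := by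
  induction k with
  | zero =>
    intro u y hy hy4
    simp only [EE, one_mul]
    refine (Pl_exp l1 y x0).trans (Real.exp_le_exp.2 ?_)
    have h1 := hbase y hy hy4
    have h2 := nsq_nonneg (Bv l1 y)
    push_cast; linarith
  | succ k ih =>
    intro u y hy hy4
    simp only [EE]
    set lb := per b (Δ + J * Δ1) with hlb
    set B := Bv lb y with hB
    let c : Fin n → ℝ := Bv lb (ew u)
    have hc0 : ∀ v, 0 ≤ c v := Bv_nonneg lb (ew_nonneg u)
    have hc1 : ∑ v, c v = 1 := by show ∑ v, Bv lb (ew u) v = 1; rw [sum_Bv, sum_ew]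
    let yy : ℕ → Fin n → Fin n → ℝ := fun j w v => B v + β * (qv b (Δ + (j + 1) * Δ1) w v - 1 / (n:ℝ))
    have hconB := H.con (Δ + J * Δ1) (by omega) y hy
    have hBn : nsq B ≤ 1 := by
      have h2 := H.hβ2
      have h3 : 0 ≤ nsq B := nsq_nonneg B
      have h4 : 4 ≤ β ^ 2 := by nlinarith
      change nsq B * β ^ 2 ≤ _ at hconB
      nlinarith
    have hB0 : ∑ v, B v = 0 := by rw [hB, sum_Bv, hy]
    have hyy : ∀ j w, ∑ v, yy j w v = 0 ∧ nsq (yy j w) ≤ 4 := by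
      intro j w
      obtain ⟨h1, h2⟩ := qv_cent H (Δ + (j + 1) * Δ1) (by omega) w
      constructor
      · show ∑ v, (B v + β * (qv b (Δ + (j + 1) * Δ1) w v - 1 / (n:ℝ))) = 0
        rw [Finset.sum_add_distrib, ← Finset.mul_sum, h2, hB0]; ring
      · refine (nsq_add_le B (fun v => β * (qv b (Δ + (j + 1) * Δ1) w v - 1 / (n:ℝ)))).trans ?_
        rw [nsq_smul]; linarith
    have key : ∀ (x : Fin n → ℤ) (Z : Fin n → ℝ), (∀ u, 0 < Z u) →
      Pl lb (fun x' => up b J Δ Δ1 β γ x Z u * Real.exp (dt y (cx x'))) x ≤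
      Real.exp 1 * ∑ v, c v * (Z v * Real.exp (dt B (cx x)) +
        ∑ j ∈ Finset.range J, ∑ w, Real.exp (γ - β) * qv b (Δ + (j + 1) * Δ1) w v * (Z v * Real.exp (dt (yy j w) (cx x)))) := by
      intro x Z hZ
      rw [Pl_mul]
      have h1 := Pl_exp lb y x
      have h2 : Real.exp (dt (Bv lb y) (cx x) + (nsq y - nsq (Bv lb y)) / 4) ≤ Real.exp 1 * Real.exp (dt B (cx x)) := by
        rw [← Real.exp_add]
        refine Real.exp_le_exp.2 ?_
        have := nsq_nonneg (Bv lb y)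
        rw [hB]; linarith
      refine (mul_le_mul_of_nonneg_left (h1.trans h2) (up_pos x Z hZ u).le).trans (le_of_eq ?_)
      unfold up
      rw [ev_eq, mul_left_comm, Finset.sum_mul]
      congr 1
      refine Finset.sum_congr rfl fun v _ => ?_
      show c v * _ * _ = _
      rw [mul_assoc]
      congr 1
      have h3 : Real.exp γ * SS b J Δ Δ1 β v x * Real.exp (dt B (cx x)) = ∑ j ∈ Finset.range J, ∑ w, Real.exp (γ - β) * qv b (Δ + (j + 1) * Δ1) w v * Real.exp (dt (yy j w) (cx x)) := by
        unfold SS Sj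
        rw [mul_assoc, Finset.sum_mul, Finset.mul_sum]
        refine Finset.sum_congr rfl fun j _ => ?_
        rw [Finset.sum_mul, Finset.mul_sum]
        refine Finset.sum_congr rfl fun w _ => ?_
        have h4 : dt (yy j w) (cx x) = dt B (cx x) + β * dt (qv b (Δ + (j + 1) * Δ1) w) (cx x) := by
          rw [← dt_sub_const H.hn (qv b (Δ + (j + 1) * Δ1) w) (1 / (n:ℝ)) x, ← dt_smul, ← dt_add]
        rw [h4, Real.exp_add, Real.exp_sub, mul_sub, Real.exp_sub, mul_one]
        field_simp
      calc Z v * (1 + Real.exp γ * SS b J Δ Δ1 β v x) * Real.exp (dt B (cx x)) =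
          Z v * Real.exp (dt B (cx x)) + Z v * (Real.exp γ * SS b J Δ Δ1 β v x * Real.exp (dt B (cx x))) := by ring
        _ = _ := by
          rw [h3, Finset.mul_sum]
          congr 1
          refine Finset.sum_congr rfl fun j _ => ?_
          rw [Finset.mul_sum]
          exact Finset.sum_congr rfl fun w _ => by ring
    refine (EE_mono (fun x Z hZ => up_pos x Z hZ) k key).trans ?_
    rw [EE_mul, EE_sum]
    set R := Real.exp (2 + 2 * (k:ℝ)) with hR
    have hRp : 0 < R := Real.exp_pos _
    have hv : ∀ v, EE l1 lb (up b J Δ Δ1 β γ) x0 k (fun x Z => c v * (Z v * Real.exp (dt B (cx x)) +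
        ∑ j ∈ Finset.range J, ∑ w, Real.exp (γ - β) * qv b (Δ + (j + 1) * Δ1) w v * (Z v * Real.exp (dt (yy j w) (cx x))))) ≤ c v * (2 * R) := by
      intro v
      rw [EE_mul]
      refine mul_le_mul_of_nonneg_left ?_ (hc0 v)
      rw [EE_add, EE_sum]
      have h1 := ih v B hB0 (by linarith)
      have h2 : ∀ j, EE l1 lb (up b J Δ Δ1 β γ) x0 k (fun x Z => ∑ w, Real.exp (γ - β) * qv b (Δ + (j + 1) * Δ1) w v * (Z v * Real.exp (dt (yy j w) (cx x)))) ≤ Real.exp (γ - β) * R := by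
        intro j
        rw [EE_sum]
        calc _ ≤ ∑ w, Real.exp (γ - β) * qv b (Δ + (j + 1) * Δ1) w v * R := by
              refine Finset.sum_le_sum fun w _ => ?_
              rw [EE_mul]
              exact mul_le_mul_of_nonneg_left (ih v (yy j w) (hyy j w).1 (hyy j w).2)
                (mul_nonneg (Real.exp_pos _).le (qv_nonneg b _ w v))
          _ = _ := by rw [← Finset.sum_mul, ← Finset.mul_sum, sum_qv, mul_one]
      have h3 := Finset.sum_le_sum fun j (_ : j ∈ Finset.range J) => h2 j
      rw [Finset.sum_const, Finset.card_range, nsmul_eq_mul] at h3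
      have h4 : (J:ℝ) * Real.exp (γ - β) ≤ 1 := by
        have h5 : Real.exp (γ - β) ≤ Real.exp (-J) := Real.exp_le_exp.2 (by linarith [H.hγ])
        have h6 := Real.add_one_le_exp (J:ℝ)
        have h7 : Real.exp (J:ℝ) * Real.exp (-J) = 1 := by rw [← Real.exp_add]; simp
        have h8 := Real.exp_pos (-(J:ℝ))
        have h9 : (0:ℝ) ≤ J := by positivity
        nlinarith
      nlinarith
    refine (mul_le_mul_of_nonneg_left (Finset.sum_le_sum fun v _ => hv v) (Real.exp_pos 1).le).trans ?_
    rw [← Finset.sum_mul, hc1, one_mul]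
    have e5 : 2 ≤ Real.exp 1 := by have := Real.add_one_le_exp 1; linarith
    have e6 : Real.exp (2 + 2 * ((k + 1 : ℕ) : ℝ)) = Real.exp 1 * Real.exp 1 * R := by
      rw [hR, ← Real.exp_add, ← Real.exp_add]; congr 1; push_cast; ring
    rw [e6]
    nlinarith [Real.exp_pos 1, mul_le_mul_of_nonneg_right e5 hRp.le]

noncomputable def bad (x : Fin n → ℤ) : ℝ := by
  classical exact if ∃ u, 6 ≤ cx x u then 1 else 0

lemma block_main (H : Hyp b J Δ Δ1 β γ) (hJ3 : 3 ≤ J)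
    (hbase : ∀ y : Fin n → ℝ, ∑ u, y u = 0 → nsq y ≤ 4 → dt (Bv l1 y) (cx x0) ≤ 1)
    (K : ℝ) (hK : 0 ≤ K) (hx0 : ∀ u, cx x0 u ≤ K) (N : ℕ) :
    Pl (l1 ++ per (per b (Δ + J * Δ1)) N) bad x0 ≤
      n * Real.exp (2 + 2 * N - ((Δ + J * Δ1) * b.length : ℕ) * N) +
      Real.exp N * (2 * Real.exp (3 - J)) ^ N * (n * K) := by
  set p : ℕ := (Δ + J * Δ1) * b.length with hp
  have hp0 : 0 < p := by
    have h1 := List.length_pos_iff.2 H.hb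
    have h2 : 0 < Δ + J * Δ1 := by have := Nat.mul_pos (show 0 < J from H.hJ) H.hD1; omega
    exact Nat.mul_pos h2 h1
  have hpR : (0:ℝ) < p := by exact_mod_cast hp0
  have hii := EE_ii (l1 := l1) (x0 := x0) H hJ3 N
  have hi := EE_i H hbase N
  rw [← hp] at hii
  set a : ℝ := 1 / (p : ℝ) with ha
  set z : ℝ := Real.exp (p * N) with hz
  have hzp : 0 < z := Real.exp_pos _
  rw [← EE_x (upd := up b J Δ Δ1 β γ)]
  have key : ∀ (x : Fin n → ℤ) (Z : Fin n → ℝ), (∀ u, 0 < Z u) →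
     bad x ≤ z⁻¹ * (∑ u, Z u * Real.exp (dt (fun _ => 0) (cx x))) + z ^ a * ∑ u, hh x u * (Z u) ^ (-a) := by
    intro x Z hZ
    have e0 : Real.exp (dt (fun _ => 0) (cx x)) = 1 := by unfold dt; simp
    simp only [e0, mul_one]
    have n1 : 0 ≤ ∑ u, Z u := Finset.sum_nonneg fun u _ => (hZ u).le
    have n2 : 0 ≤ ∑ u, hh x u * (Z u) ^ (-a) := Finset.sum_nonneg fun u _ =>
      mul_nonneg (hh_nonneg x u) (Real.rpow_pos_of_pos (hZ u) _).le
    have n3 : 0 < z ^ a := Real.rpow_pos_of_pos hzp _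
    have n4 : 0 ≤ z⁻¹ * ∑ u, Z u := by positivity
    have n5 : 0 ≤ z ^ a * ∑ u, hh x u * (Z u) ^ (-a) := by positivity
    unfold bad
    split_ifs with hb
    · obtain ⟨u, hu⟩ := hb
      have hhu : 1 ≤ hh x u := le_max_of_le_left (by linarith)
      by_cases hc : z ≤ Z u
      · have h1 : Z u ≤ ∑ u, Z u := Finset.single_le_sum (fun u _ => (hZ u).le) (Finset.mem_univ u)
        have h2 : 1 ≤ z⁻¹ * ∑ u, Z u := by
          rw [inv_mul_eq_div, le_div_iff₀ hzp]; linarith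
        linarith
      · have h1 : hh x u * (Z u) ^ (-a) ≤ ∑ u, hh x u * (Z u) ^ (-a) :=
          Finset.single_le_sum (f := fun u => hh x u * (Z u) ^ (-a)) (fun u _ => mul_nonneg (hh_nonneg x u) (Real.rpow_pos_of_pos (hZ u) _).le) (Finset.mem_univ u)
        have h2 : z ^ (-a) ≤ (Z u) ^ (-a) :=
          Real.rpow_le_rpow_of_nonpos (hZ u) (not_le.1 hc).le (by rw [ha]; simp)
        have h3 : z ^ a * z ^ (-a) = 1 := by rw [← Real.rpow_add hzp]; simp
        have h4 : z ^ (-a) ≤ hh x u * (Z u) ^ (-a) := by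
          have := Real.rpow_pos_of_pos (hZ u) (-a); nlinarith
        have h5 := mul_le_mul_of_nonneg_left (h4.trans h1) n3.le
        rw [h3] at h5
        linarith
    · linarith
  refine (EE_mono (fun x Z hZ => up_pos x Z hZ) N key).trans ?_
  rw [EE_add, EE_mul, EE_mul, EE_sum]
  have e1 : z ^ a = Real.exp N := by
    rw [hz, ← Real.exp_mul]; congr 1; rw [ha]; field_simp
  rw [e1]
  refine add_le_add ?_ ?_
  · have h1 := Finset.sum_le_sum fun u (_ : u ∈ (Finset.univ : Finset (Fin n))) => hi u (fun _ => 0) (by simp) (by unfold nsq; simp)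
    refine (mul_le_mul_of_nonneg_left h1 (inv_pos.2 hzp).le).trans (le_of_eq ?_)
    rw [Finset.sum_const, Finset.card_univ, Fintype.card_fin, nsmul_eq_mul, hz, ← Real.exp_neg, mul_left_comm, ← Real.exp_add]
    congr 2; ring
  · refine (mul_le_mul_of_nonneg_left hii (Real.exp_pos _).le).trans ?_
    rw [mul_assoc]
    refine mul_le_mul_of_nonneg_left (mul_le_mul_of_nonneg_left ?_ (by positivity)) (Real.exp_pos _).le
    calc ∑ u, hh x0 u ≤ ∑ u : Fin n, K := Finset.sum_le_sum fun u _ => max_le (by have := hx0 u; linarith) hK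
      _ = _ := by simp

end


lemma per_per {A : Type*} (b : List A) (m N : ℕ) : per (per b m) N = per b (N * m) := by
  induction N with
  | zero => simp [per]
  | succ N ih => rw [show (N + 1) * m = m + N * m by ring, per_add b, ← ih]; rfl

lemma bad_nonneg {n : ℕ} (x : Fin n → ℤ) : 0 ≤ bad x := by
  unfold bad; split_ifs <;> norm_num

lemma bad_step {n : ℕ} (m : Matching n) (φ) (x : Fin n → ℤ) : bad (step m φ x) ≤ bad x := by
  unfold bad
  split_ifs with h1 h2 h2
  · exact le_rfl
  · exfalso
    obtain ⟨u, hu⟩ := h1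
    have := hu.trans (cx_step_le m φ x u)
    rcases le_max_iff.1 this with h | h
    · exact h2 ⟨_, h⟩
    · exact h2 ⟨_, h⟩
  · norm_num
  · exact le_rfl

lemma Pl_bad_le {n : ℕ} (l : List (Matching n)) (x : Fin n → ℤ) : Pl l bad x ≤ bad x := by
  induction l generalizing x with
  | nil => exact le_rfl
  | cons m l ih =>
    show Pm m (Pl l bad) x ≤ bad x
    refine (Pm_mono m ih x).trans ?_
    unfold Pm
    refine (ex_mono fun φ => bad_step m φ x).trans (le_of_eq (ex_const _))

lemma Pl_bad_append {n : ℕ} (l l' : List (Matching n)) (x : Fin n → ℤ) :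
    Pl (l ++ l') bad x ≤ Pl l bad x := by
  rw [Pl_append]; exact Pl_mono l (Pl_bad_le l') x

lemma step_neg {n : ℕ} (m : Matching n) (φ : Fin n → Fin n → Bool) (x : Fin n → ℤ) :
    step m (fun u v => !(φ u v)) (-x) = - step m φ x := by
  have e : ∀ s : ℤ, Int.ediv s 2 = s / 2 := fun _ => rfl
  funext u
  simp only [Pi.neg_apply]
  unfold step; simp only [e, Pi.neg_apply]
  by_cases h1 : m.f u = u
  · simp [h1]
  · by_cases h2 : u < m.f u
    · cases h : φ u (m.f u) <;> simp [h1, h2] <;> omega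
    · cases h : φ (m.f u) u <;> simp [h1, h2] <;> omega

lemma Pm_neg {n : ℕ} (m : Matching n) (f : (Fin n → ℤ) → ℝ) (x : Fin n → ℤ) :
    Pm m (fun y => f (-y)) x = Pm m f (-x) := by
  unfold Pm ex
  congr 1
  let e : (Fin n → Fin n → Bool) ≃ (Fin n → Fin n → Bool) :=
    Equiv.piCongrRight fun _ => Equiv.piCongrRight fun _ => Equiv.boolNot
  rw [← e.sum_comp (fun φ => f (step m φ (-x)))]
  refine Finset.sum_congr rfl fun φ _ => ?_
  show f (- step m φ x) = _
  rw [← step_neg]; rfl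

lemma Pl_neg {n : ℕ} (l : List (Matching n)) (f : (Fin n → ℤ) → ℝ) :
    ∀ x : Fin n → ℤ, Pl l (fun y => f (-y)) x = Pl l f (-x) := by
  induction l with
  | nil => intro x; rfl
  | cons m l ih =>
    intro x
    show Pm m (Pl l fun y => f (-y)) x = Pm m (Pl l f) (-x)
    rw [← Pm_neg]; congr 1; funext y; exact ih y

lemma ex_snoc {A : Type*} [Fintype A] [Nonempty A] (T : ℕ) (F : (Fin (T+1) → A) → ℝ) :
    ex F = ex fun ω : Fin T → A => ex fun a : A => F (Fin.snoc ω a) := by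
  unfold ex
  rw [← Finset.sum_div, div_div]
  have h : ∑ ω, F ω = ∑ ω : Fin T → A, ∑ a : A, F (Fin.snoc ω a) := by
    rw [← Fintype.sum_prod_type' (f := fun (ω : Fin T → A) (a : A) => F (Fin.snoc ω a)), ← (Fin.snocEquiv fun _ : Fin (T+1) => A).sum_comp]
    rw [← (Equiv.prodComm _ _).sum_comp]
    rfl
  rw [h]; congr 1
  simp [pow_succ, mul_comm]

lemma loads_congr {n : ℕ} (M : ℕ → Matching n) (Φ Φ' : ℕ → Fin n → Fin n → Bool) (x : Fin n → ℤ) (T : ℕ)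
    (h : ∀ s, 1 ≤ s → s ≤ T → Φ s = Φ' s) : loads M Φ x T = loads M Φ' x T := by
  induction T with
  | zero => rfl
  | succ T ih =>
    show step _ (Φ (T+1)) (loads M Φ x T) = step _ (Φ' (T+1)) (loads M Φ' x T)
    rw [ih fun s h1 h2 => h s h1 (by omega), h (T+1) (by omega) le_rfl]

lemma link {n : ℕ} (M : ℕ → Matching n) (x : Fin n → ℤ) (T : ℕ) : ∀ f : (Fin n → ℤ) → ℝ,
    ex (fun ω : Fin T → Fin n → Fin n → Bool => f (loads M (lift (orientDefault n) ω) x T)) =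
      Pl ((List.range T).map fun i => M (i + 1)) f x := by
  induction T with
  | zero =>
    intro f
    show ex (fun ω : Fin 0 → Fin n → Fin n → Bool => f x) = f x
    exact ex_const _
  | succ T ih =>
    intro f
    rw [ex_snoc, List.range_succ, List.map_append, Pl_append, ← ih]
    congr 1; funext ω
    show _ = ex fun φ => f (step (M (T+1)) φ _)
    congr 1; funext φ
    congr 1
    show step (M (0 + T + 1)) (lift (orientDefault n) (Fin.snoc ω φ : Fin (T+1) → Fin n → Fin n → Bool) (T+1)) (loads M _ x T) = _
    have h1 : lift (orientDefault n) (Fin.snoc ω φ : Fin (T+1) → Fin n → Fin n → Bool) (T+1) = φ := by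
      unfold lift
      simp [Fin.snoc]
    have h2 : loads M (lift (orientDefault n) (Fin.snoc ω φ : Fin (T+1) → Fin n → Fin n → Bool)) x T = loads M (lift (orientDefault n) ω) x T := by
      apply loads_congr
      intro s h1 h2
      unfold lift
      have h3 : s - 1 < T := by omega
      have h4 : s - 1 < T + 1 := by omega
      simp [Fin.snoc, h3, h4]
    rw [h1, h2, zero_add]

lemma circ_list {n d : ℕ} (hd : 0 < d) (Ms : Fin d → Matching n) (k : ℕ) :
    ((List.range (k * d)).map fun i => circuit hd Ms (i + 1)) = per (List.ofFn Ms) k := by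
  induction k with
  | zero => simp [per]
  | succ k ih =>
    rw [show (k + 1) * d = d + k * d by ring, List.range_add, List.map_append, List.map_map]
    simp only [per]
    rw [← ih]
    congr 1
    · apply List.ext_getElem
      · simp
      · intro i h1 h2
        have h3 : i < d := by simpa using h1
        simp [circuit, Nat.mod_eq_of_lt h3]
    · apply List.map_congr_left
      intro i _
      simp only [Function.comp, circuit]
      congr 2
      rw [Nat.add_sub_cancel, Nat.add_sub_cancel, Nat.add_mod_left]

lemma circ_split {n d : ℕ} (hd : 0 < d) (Ms : Fin d → Matching n) (k T : ℕ) (h : k * d ≤ T) :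
    ∃ l', ((List.range T).map fun i => circuit hd Ms (i + 1)) = per (List.ofFn Ms) k ++ l' := by
  obtain ⟨r, rfl⟩ := Nat.exists_eq_add_of_le h
  rw [List.range_add, List.map_append, circ_list]
  exact ⟨_, rfl⟩

lemma discZ_le {n : ℕ} (x : Fin n → ℤ) (K : ℝ) (h : discZ x ≤ K) (u v : Fin n) :
    (x u : ℝ) - x v ≤ K := by
  have h1 : |(x u : ℝ) - x v| ≤ discZ x := by
    unfold discZ disc
    refine le_trans ?_ (le_ciSup (Set.finite_range _).bddAbove u)
    exact le_ciSup (f := fun v => |(x u : ℝ) - x v|) (Set.finite_range _).bddAbove v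
  exact (le_abs_self _).trans (h1.trans h)

lemma cx_le {n : ℕ} (hn : 0 < n) (x : Fin n → ℤ) (K : ℝ) (h : ∀ u v, (x u : ℝ) - x v ≤ K) (u : Fin n) :
    cx x u ≤ K := by
  unfold cx
  have h1 : ∑ v : Fin n, ((x u : ℝ) - x v) ≤ ∑ v : Fin n, K := Finset.sum_le_sum fun v _ => h u v
  rw [Finset.sum_sub_distrib] at h1
  simp at h1
  have hn' : (0:ℝ) < n := by exact_mod_cast hn
  rw [sub_le_iff_le_add, ← sub_le_iff_le_add', le_div_iff₀ hn']
  linarith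

lemma cx_neg {n : ℕ} (x : Fin n → ℤ) (u : Fin n) : cx (-x) u = - cx x u := by
  unfold cx; simp; ring

lemma disc_bad {n : ℕ} (hn : 0 < n) (x : Fin n → ℤ) (h : ¬ discZ x ≤ 12) : 1 ≤ bad x + bad (-x) := by
  by_contra hc
  apply h
  have h1 : ¬ ∃ u, 6 ≤ cx x u := by
    intro h1
    have := bad_nonneg (-x)
    apply hc
    have : bad x = 1 := by unfold bad; rw [if_pos h1]
    linarith
  have h2 : ¬ ∃ u, 6 ≤ cx (-x) u := by
    intro h1
    have := bad_nonneg x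
    apply hc
    have : bad (-x) = 1 := by unfold bad; rw [if_pos h1]
    linarith
  push Not at h1 h2
  have : Nonempty (Fin n) := ⟨⟨0, hn⟩⟩
  unfold discZ disc
  refine ciSup_le fun u => ciSup_le fun v => ?_
  have a1 := h1 u
  have a2 := h1 v
  have a3 := h2 u
  have a4 := h2 v
  rw [cx_neg] at a3 a4
  unfold cx at a1 a2 a3 a4
  rw [abs_le]; constructor <;> linarith

lemma pr_ge {Ω : Type*} [Fintype Ω] [Nonempty Ω] (A : Ω → Prop) (g : Ω → ℝ) (hg : ∀ ω, 0 ≤ g ω) (h : ∀ ω, ¬ A ω → 1 ≤ g ω) :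
    1 - ex g ≤ pr A := by
  classical
  have h1 : pr A = ex fun ω => if A ω then (1:ℝ) else 0 := by
    unfold pr ex
    congr 1
    rw [Finset.sum_boole]
  rw [h1, sub_le_iff_le_add, ← ex_add]
  refine le_trans (le_of_eq (ex_const (Ω := Ω) 1).symm) ?_
  apply ex_mono
  intro ω
  split_ifs with hA
  · have := hg ω; linarith
  · have := h ω hA; linarith

/-- reduction of the probability statement -/
lemma reduce {n d : ℕ} (hd : 0 < d) (hn : 0 < n) (Ms : Fin d → Matching n) (x : Fin n → ℤ) (k T : ℕ) (h : k * d ≤ T)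
    (e : ℝ) (h1 : Pl (per (List.ofFn Ms) k) bad x ≤ e) (h2 : Pl (per (List.ofFn Ms) k) bad (-x) ≤ e) :
    1 - 2 * e ≤ pr (fun ω : Fin T → Fin n → Fin n → Bool =>
        discZ (loads (circuit hd Ms) (lift (orientDefault n) ω) x T) ≤ 12) := by
  refine le_trans ?_ (pr_ge _ (fun ω : Fin T → Fin n → Fin n → Bool =>
     (fun y => bad y + bad (-y)) (loads (circuit hd Ms) (lift (orientDefault n) ω) x T)) (fun ω => add_nonneg (bad_nonneg _) (bad_nonneg _)) fun ω hω => disc_bad hn _ hω)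
  rw [link (circuit hd Ms) x T (fun y => bad y + bad (-y)), Pl_add, Pl_neg]
  obtain ⟨l', hl⟩ := circ_split hd Ms k T h
  rw [hl]
  have := Pl_bad_append (per (List.ofFn Ms) k) l' x
  have := Pl_bad_append (per (List.ofFn Ms) k) l' (-x)
  linarith



lemma hyp_ok {n d : ℕ} (hd : 0 < d) (Ms : Fin d → Matching n) (hl : lamMax (roundMatrix Ms) < 1) (J : ℕ)
    (hJ : 10 ≤ J) (hJ2 : 72 * (d + 1) ^ 2 * (J : ℝ) ^ 8 < 2 ^ J) (hn : 3 * J ^ 2 < n)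
    (hJl : 1 / (1 - lamMax (roundMatrix Ms)) ≤ 2 ^ J) :
    Hyp (List.ofFn Ms) J (2 * J * 2 ^ J) (2 ^ J) (Real.exp (2 * J))
      (((2 * J * 2 ^ J + J * 2 ^ J) * (List.ofFn Ms).length : ℕ) * ((J : ℝ) - 3)) := by
  have hJR : (10 : ℝ) ≤ J := by exact_mod_cast hJ
  have hdR : (1 : ℝ) ≤ d := by exact_mod_cast hd
  have hE : 2 * (J : ℝ) + 1 ≤ Real.exp (2 * J) := Real.add_one_le_exp _
  have hl' : 0 < 1 - lamMax (roundMatrix Ms) := by linarith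
  rw [div_le_iff₀ hl'] at hJl
  refine ⟨by omega, ?_, by omega, Nat.one_le_two_pow, ?_, ?_, by linarith, by linarith, ?_, rfl⟩
  · intro h
    have := congrArg List.length h
    simp at this; omega
  · intro k hk w
    exact heat Ms hl J (by omega) hn hJ2 _ (ew_nonneg w) (sum_ew w) (le_of_eq (nsq_ew w)) k hk
  · intro k hk y hy
    have h1 := nsq_per Ms y hy k
    have h2 := lam_pow (roundMatrix Ms) k
    have hkR : (2 * J * 2 ^ J : ℝ) ≤ k := by exact_mod_cast hk
    have h3 : lamMax (roundMatrix Ms) ^ k ≤ Real.exp (-(2 * J)) := by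
      refine h2.trans (Real.exp_le_exp.2 ?_)
      have h4 := mul_le_mul_of_nonneg_left hkR hl'.le
      nlinarith
    have h0 : 0 ≤ lamMax (roundMatrix Ms) ^ k := pow_nonneg (lam_nonneg _) _
    have h5 : (lamMax (roundMatrix Ms) ^ k * Real.exp (2 * J)) ≤ 1 := by
      have := mul_le_mul_of_nonneg_right h3 (Real.exp_pos (2 * J)).le
      rwa [← Real.exp_add, neg_add_cancel, Real.exp_zero] at this
    have h6 : (lamMax (roundMatrix Ms) ^ k * Real.exp (2 * J)) ^ 2 ≤ 1 :=
      pow_le_one₀ (mul_nonneg h0 (Real.exp_pos _).le) h5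
    calc _ ≤ ((lamMax (roundMatrix Ms) ^ k) ^ 2 * nsq y) * Real.exp (2 * J) ^ 2 :=
          mul_le_mul_of_nonneg_right h1 (by positivity)
      _ = (lamMax (roundMatrix Ms) ^ k * Real.exp (2 * J)) ^ 2 * nsq y := by ring
      _ ≤ 1 * nsq y := mul_le_mul_of_nonneg_right h6 (nsq_nonneg y)
      _ = _ := one_mul _
  · have e1 : (2:ℝ) ^ J * 2 ^ J ≤ Real.exp (2 * J) := by
      have : (2:ℝ) ≤ Real.exp 1 := by have := Real.add_one_le_exp (1:ℝ); linarith
      have h := pow_le_pow_left₀ (by norm_num) this J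
      rw [← Real.exp_nat_mul, mul_one] at h
      rw [two_mul, Real.exp_add]
      exact mul_le_mul h h (by positivity) (by positivity)
    have e2 : 3 * d * (J:ℝ) ^ 2 + 1 ≤ 2 ^ J := by
      refine le_trans ?_ hJ2.le
      have : (J:ℝ) ^ 2 ≤ (J:ℝ) ^ 8 := pow_le_pow_right₀ (by linarith) (by norm_num)
      have h1 : (1:ℝ) ≤ J ^ 2 := one_le_pow₀ (by linarith)
      have : 72 * ((d:ℝ) + 1) ^ 2 * (J : ℝ) ^ 2 ≤ 72 * (d + 1) ^ 2 * (J : ℝ) ^ 8 := by gcongr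
      refine le_trans ?_ this
      have h2 : 3 * (d:ℝ) + 1 ≤ 72 * (d + 1) ^ 2 := by nlinarith
      nlinarith
    have e3 : (J:ℝ) ≤ 2 ^ J := by exact_mod_cast Nat.lt_two_pow_self.le
    have e4 := mul_le_mul_of_nonneg_right e2 (show (0:ℝ) ≤ 2 ^ J by positivity)
    push_cast
    rw [List.length_ofFn]
    have e5 : 0 ≤ (d:ℝ) * J * 2 ^ J := by positivity
    nlinarith

lemma base_ok {n d : ℕ} (hn : 0 < n) (Ms : Fin d → Matching n) (x : Fin n → ℤ) (K : ℝ) (hK : 2 ≤ K)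
    (hx : ∀ u v, (x u : ℝ) - x v ≤ K) (T : ℕ)
    (hT : Real.log (2 * (K * n)) ≤ (1 - lamMax (roundMatrix Ms)) * T)
    (y : Fin n → ℝ) (hy : ∑ u, y u = 0) (hy2 : nsq y ≤ 4) : dt (Bv (per (List.ofFn Ms) T) y) (cx x) ≤ 1 := by
  have hnR : (1:ℝ) ≤ n := by exact_mod_cast hn
  have h1 := nsq_per Ms y hy T
  have h2 := lam_pow (roundMatrix Ms) T
  set a := lamMax (roundMatrix Ms) ^ T with ha
  have ha0 : 0 ≤ a := pow_nonneg (lam_nonneg _) _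
  have hp : 0 < 2 * (K * n) := by positivity
  have h3 : a ≤ 1 / (2 * (K * n)) := by
    refine h2.trans ((Real.exp_le_exp.2 (neg_le_neg hT)).trans (le_of_eq ?_))
    rw [Real.exp_neg, Real.exp_log hp, one_div]
  rw [le_div_iff₀ hp] at h3
  have h4 : nsq (cx x) ≤ n * K ^ 2 := by
    unfold nsq
    calc ∑ u, cx x u ^ 2 ≤ ∑ u : Fin n, K ^ 2 := Finset.sum_le_sum fun u _ => by
          have c1 := cx_le hn x K hx u
          have c2 := cx_le hn (-x) K (fun u v => by have := hx v u; push_cast [Pi.neg_apply]; linarith) u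
          rw [cx_neg] at c2
          exact sq_le_sq' (by linarith) c1
      _ = _ := by simp
  have h5 : dt (Bv (per (List.ofFn Ms) T) y) (cx x) ^ 2 ≤ nsq (Bv (per (List.ofFn Ms) T) y) * nsq (cx x) :=
    Finset.sum_mul_sq_le_sq_mul_sq _ _ _
  have h6 : nsq (Bv (per (List.ofFn Ms) T) y) ≤ a ^ 2 * 4 :=
    h1.trans (mul_le_mul_of_nonneg_left hy2 (by positivity))
  have h7 : nsq (Bv (per (List.ofFn Ms) T) y) * nsq (cx x) ≤ (a ^ 2 * 4) * (n * K ^ 2) :=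
    mul_le_mul h6 h4 (nsq_nonneg _) (by positivity)
  have h8 : (a * (2 * (K * n))) ^ 2 ≤ 1 := pow_le_one₀ (by positivity) h3
  have h9 : (a ^ 2 * 4) * (n * K ^ 2) ≤ (a * (2 * (K * n))) ^ 2 := by
    have : (a * (2 * (K * n))) ^ 2 = (a ^ 2 * 4) * (n * K ^ 2) * n := by ring
    rw [this]
    exact le_mul_of_one_le_right (by positivity) hnR
  have : dt (Bv (per (List.ofFn Ms) T) y) (cx x) ^ 2 ≤ 1 := by linarith
  exact le_of_abs_le ((sq_le_one_iff_abs_le_one _).1 this)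

lemma tail_ok {n d : ℕ} (hd : 0 < d) (Ms : Fin d → Matching n) (hl : lamMax (roundMatrix Ms) < 1) (J : ℕ)
    (hJ : 10 ≤ J) (hJ2 : 72 * (d + 1) ^ 2 * (J : ℝ) ^ 8 < 2 ^ J) (hn : 3 * J ^ 2 < n)
    (hJl : 1 / (1 - lamMax (roundMatrix Ms)) ≤ 2 ^ J) (K : ℝ) (hK : 2 ≤ K) (T1 N : ℕ)
    (hT : Real.log (2 * (K * n)) ≤ (1 - lamMax (roundMatrix Ms)) * T1)
    (hN : 8 * Real.log (K * n) ≤ J * N)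
    (x : Fin n → ℤ) (hx : ∀ u v, (x u : ℝ) - x v ≤ K) :
    Pl (per (List.ofFn Ms) (T1 + N * (3 * J * 2 ^ J))) bad x ≤ 2 * Real.exp (-(3 * Real.log (K * n))) := by
  have hn0 : 0 < n := by omega
  have hnR : (1:ℝ) ≤ n := by exact_mod_cast hn0
  have hJR : (10 : ℝ) ≤ J := by exact_mod_cast hJ
  have hKn : 0 < K * n := by positivity
  have H := hyp_ok hd Ms hl J hJ hJ2 hn hJl
  have hb := block_main (l1 := per (List.ofFn Ms) T1) (x0 := x) H (by omega) (fun y hy hy2 => base_ok hn0 Ms x K hK hx T1 hT y hy hy2)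
    K (by linarith) (cx_le hn0 x K hx) N
  rw [per_per, ← per_add, show 2 * J * 2 ^ J + J * 2 ^ J = 3 * J * 2 ^ J by ring] at hb
  refine hb.trans ?_
  set L := Real.log (K * n) with hL
  have hL0 : 0 < L := Real.log_pos (by nlinarith)
  have hN1 : (1:ℝ) ≤ N := by
    have : 0 < N := by
      rcases Nat.eq_zero_or_pos N with h | h
      · rw [h] at hN; simp at hN; linarith
      · exact h
    exact_mod_cast this
  have hnL : (n:ℝ) ≤ Real.exp L := by rw [hL, Real.exp_log hKn]; nlinarith
  have hnKL : (n:ℝ) * K = Real.exp L := by rw [hL, Real.exp_log hKn]; ring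
  have hJN : 0 ≤ (J:ℝ) * N := by positivity
  have t1 : n * Real.exp (2 + 2 * N - ((3 * J * 2 ^ J) * (List.ofFn Ms).length : ℕ) * N) ≤ Real.exp (-(3 * L)) := by
    have hp : 6 * (J:ℝ) ≤ ((3 * J * 2 ^ J) * (List.ofFn Ms).length : ℕ) := by
      rw [List.length_ofFn]
      have a1 : 2 ≤ 2 ^ J := by
        calc 2 = 2 ^ 1 := rfl
          _ ≤ _ := Nat.pow_le_pow_right (by norm_num) (by omega)
      have a2 : 6 * J ≤ 3 * J * 2 ^ J * d := by
        calc 6 * J = 3 * J * 2 * 1 := by ring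
          _ ≤ _ := Nat.mul_le_mul (Nat.mul_le_mul_left _ a1) hd
      exact_mod_cast a2
    have h1 := mul_le_mul_of_nonneg_right hp (show (0:ℝ) ≤ N by linarith)
    have h2 : 2 + 2 * (N:ℝ) ≤ J * N := by nlinarith
    refine (mul_le_mul_of_nonneg_right hnL (Real.exp_pos _).le).trans ?_
    rw [← Real.exp_add]
    refine Real.exp_le_exp.2 ?_
    linarith
  have t2 : Real.exp N * (2 * Real.exp (3 - J)) ^ N * (n * K) ≤ Real.exp (-(3 * L)) := by
    have : (2:ℝ) ≤ Real.exp 1 := by have := Real.add_one_le_exp (1:ℝ); linarith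
    have h1 : 2 * Real.exp (3 - (J:ℝ)) ≤ Real.exp (4 - J) := by
      refine (mul_le_mul_of_nonneg_right this (Real.exp_pos _).le).trans (le_of_eq ?_)
      rw [← Real.exp_add]; congr 1; ring
    have h2 := pow_le_pow_left₀ (by positivity) h1 N
    rw [← Real.exp_nat_mul] at h2
    rw [hnKL]
    refine (mul_le_mul_of_nonneg_right (mul_le_mul_of_nonneg_left h2 (Real.exp_pos _).le) (Real.exp_pos _).le).trans ?_
    rw [← Real.exp_add, ← Real.exp_add]
    refine Real.exp_le_exp.2 ?_
    nlinarith
  linarith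

lemma J0_ex (d : ℕ) : ∃ J0 : ℕ, 10 ≤ J0 ∧ ∀ J : ℕ, J0 ≤ J → 72 * ((d:ℝ) + 1) ^ 2 * (J : ℝ) ^ 8 < 2 ^ J := by
  have h := tendsto_pow_const_div_const_pow_of_one_lt 8 (show (1:ℝ) < 2 by norm_num)
  have hc : (0:ℝ) < 1 / (72 * ((d:ℝ) + 1) ^ 2) := by positivity
  have h2 := h.eventually (gt_mem_nhds hc)
  obtain ⟨J0, h3⟩ := Filter.eventually_atTop.1 h2
  refine ⟨max 10 J0, le_max_left _ _, fun J hJ => ?_⟩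
  have h4 := h3 J ((le_max_right _ _).trans hJ)
  rw [div_lt_div_iff₀ (by positivity) (by positivity)] at h4
  linarith

lemma n_large (A : ℝ) : ∃ N0 : ℕ, ∀ n : ℕ, N0 ≤ n → 3 ≤ n ∧ A ≤ n ∧ 108 * Real.log n ^ 2 < n := by
  have h := (Real.isLittleO_pow_log_id_atTop (n := 2)).bound (show (0:ℝ) < 1 / 216 by norm_num)
  have h2 := (tendsto_natCast_atTop_atTop (R := ℝ)).eventually h
  have h3 := (tendsto_natCast_atTop_atTop (R := ℝ)).eventually_ge_atTop A
  have h4 := Filter.eventually_ge_atTop (α := ℕ) 3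
  obtain ⟨N0, h5⟩ := Filter.eventually_atTop.1 (h2.and (h3.and h4))
  refine ⟨N0, fun n hn => ?_⟩
  obtain ⟨a, b, c⟩ := h5 n hn
  refine ⟨c, b, ?_⟩
  simp only [id, Real.norm_eq_abs] at a
  have cR : (3:ℝ) ≤ n := by exact_mod_cast c
  rw [abs_of_nonneg (by positivity), abs_of_nonneg (by positivity)] at a
  linarith

set_option maxHeartbeats 4000000 in
theorem core_thm (d : ℕ) (hd : 0 < d) :
    ∃ c C γ : ℝ, 0 < c ∧ 0 < C ∧ 0 < γ ∧
    ∃ N₀ : ℕ, ∀ n : ℕ, N₀ ≤ n →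
    ∀ Ms : Fin d → Matching n,
    lamMax (roundMatrix Ms) < 1 →
    ∀ K : ℝ, 2 ≤ K → ∀ x : Fin n → ℤ, discZ x ≤ K →
    ∀ T : ℕ, T = ⌈C * Real.log (K * n) / (1 - lamMax (roundMatrix Ms))⌉₊ →
    1 - Real.exp (-(Real.log n) ^ γ) ≤
      pr (fun ω : Fin T → Fin n → Fin n → Bool =>
        discZ (loads (circuit hd Ms) (lift (orientDefault n) ω) x T) ≤ c) := by
  obtain ⟨J0, hJ0, hJ0'⟩ := J0_ex d
  set A : ℝ := 2 ^ (J0 + 1) * (4 * ((d:ℝ) + 1) ^ 2) with hA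
  obtain ⟨N0, hN0⟩ := n_large A
  refine ⟨12, 45 * d * 2 ^ (J0 + 1), 1, by norm_num, by positivity, by norm_num, N0, ?_⟩
  intro n hnn Ms hl K hK x hx T hT
  obtain ⟨hn3, hnA, hnlog⟩ := hN0 n hnn
  have hn3R : (3:ℝ) ≤ n := by exact_mod_cast hn3
  have hn0 : 0 < n := by omega
  set lam := lamMax (roundMatrix Ms) with hlam
  have hl0 : 0 ≤ lam := lam_nonneg _
  have hl1 : 0 < 1 - lam := by linarith
  have hg := gap hn0 Ms hl
  rw [← hlam] at hg
  have hr : 1 ≤ 1 / (1 - lam) := by rw [le_div_iff₀ hl1]; linarith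
  obtain ⟨k, hk1, hk2⟩ := exists_nat_pow_near hr (show (1:ℝ) < 2 by norm_num)
  set J := J0 + k + 1 with hJdef
  have hJ : 10 ≤ J := by omega
  have hJR : (10:ℝ) ≤ J := by exact_mod_cast hJ
  have hJ2 := hJ0' J (by omega)
  have hJl : 1 / (1 - lam) ≤ 2 ^ J := hk2.le.trans (pow_le_pow_right₀ (by norm_num) (by omega))
  have hJu : (2:ℝ) ^ J ≤ 2 ^ (J0 + 1) * (1 / (1 - lam)) := by
    rw [hJdef, show J0 + k + 1 = (J0 + 1) + k by ring, pow_add]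
    exact mul_le_mul_of_nonneg_left hk1 (by positivity)
  have hlogn : 0 < Real.log n := Real.log_pos (by linarith)
  have hJlog : (J:ℝ) ≤ 6 * Real.log n := by
    have a1 : 1 / (1 - lam) ≤ 4 * ((d:ℝ) + 1) ^ 2 * n ^ 3 := by
      rw [div_le_iff₀ (by positivity)] at hg
      rw [div_le_iff₀ hl1]; linarith
    have a2 : (2:ℝ) ^ J ≤ n ^ 4 := by
      calc (2:ℝ) ^ J ≤ 2 ^ (J0 + 1) * (4 * ((d:ℝ) + 1) ^ 2 * n ^ 3) := hJu.trans (by gcongr)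
        _ = A * n ^ 3 := by rw [hA]; ring
        _ ≤ n * n ^ 3 := by gcongr
        _ = _ := by ring
    have a3 := Real.log_le_log (by positivity) a2
    rw [Real.log_pow, Real.log_pow] at a3
    have a4 := Real.log_two_gt_d9
    push_cast at a3
    nlinarith
  have hn : 3 * J ^ 2 < n := by
    have : 3 * (J:ℝ) ^ 2 < n := by nlinarith
    exact_mod_cast this
  set L := Real.log (K * n) with hL
  have hKn : 0 < K * n := by positivity
  have hlL : Real.log n ≤ L := Real.log_le_log (by linarith) (by nlinarith)
  have hL1 : 1 ≤ L := by
    rw [hL, Real.le_log_iff_exp_le hKn]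
    have := Real.exp_one_lt_d9
    nlinarith
  have h2L : Real.log (2 * (K * n)) ≤ 2 * L := by
    rw [Real.log_mul (by norm_num) hKn.ne']
    have : Real.log 2 ≤ L := Real.log_le_log (by norm_num) (by nlinarith)
    linarith
  set T1 := ⌈(2:ℝ) ^ J * (2 * L)⌉₊ with hT1
  set N := ⌈8 * L / J⌉₊ with hNdef
  have b1 : (2:ℝ) ^ J * (2 * L) ≤ T1 := Nat.le_ceil _
  have b2 : (T1:ℝ) < (2:ℝ) ^ J * (2 * L) + 1 := Nat.ceil_lt_add_one (by positivity)
  have b3 : 8 * L / J ≤ N := Nat.le_ceil _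
  have b4 : (N:ℝ) < 8 * L / J + 1 := Nat.ceil_lt_add_one (by positivity)
  have hT1' : Real.log (2 * (K * n)) ≤ (1 - lam) * T1 := by
    have c1 : 1 ≤ 2 ^ J * (1 - lam) := by rwa [div_le_iff₀ hl1] at hJl
    have c2 := mul_le_mul_of_nonneg_left b1 hl1.le
    nlinarith
  have hN' : 8 * L ≤ J * N := by
    rw [div_le_iff₀ (by linarith)] at b3; linarith
  have hpair := fun u v => discZ_le x K hx u v
  have p1 := tail_ok hd Ms hl J hJ hJ2 hn hJl K hK T1 N hT1' hN' x hpair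
  have p2 := tail_ok hd Ms hl J hJ hJ2 hn hJl K hK T1 N hT1' hN' (-x)
    (fun u v => by have := hpair v u; push_cast [Pi.neg_apply]; linarith)
  have hlen : (T1 + N * (3 * J * 2 ^ J)) * d ≤ T := by
    have hpow : (1:ℝ) ≤ 2 ^ J := one_le_pow₀ (by norm_num)
    have d1 : (N:ℝ) * (3 * J * 2 ^ J) ≤ (24 * L + 3 * J) * 2 ^ J := by
      have : (N:ℝ) * (3 * J * 2 ^ J) ≤ (8 * L / J + 1) * (3 * J * 2 ^ J) := by gcongr
      refine this.trans (le_of_eq ?_)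
      field_simp; ring
    have d2 : (T1:ℝ) + N * (3 * J * 2 ^ J) ≤ 45 * L * 2 ^ J := by
      have e1 : (1:ℝ) ≤ L * 2 ^ J := by nlinarith
      have e2 : (3 * J : ℝ) * 2 ^ J ≤ (18 * L) * 2 ^ J := by
        apply mul_le_mul_of_nonneg_right _ (by positivity); linarith
      nlinarith
    have d3 : ((T1:ℝ) + N * (3 * J * 2 ^ J)) * d ≤ 45 * d * 2 ^ (J0 + 1) * L / (1 - lam) := by
      calc ((T1:ℝ) + N * (3 * J * 2 ^ J)) * d ≤ 45 * L * 2 ^ J * d := by gcongr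
        _ ≤ 45 * L * (2 ^ (J0 + 1) * (1 / (1 - lam))) * d := by gcongr
        _ = _ := by ring
    have d4 : 45 * d * 2 ^ (J0 + 1) * L / (1 - lam) ≤ T := by rw [hT]; exact Nat.le_ceil _
    have := d3.trans d4
    exact_mod_cast this
  refine le_trans ?_ (reduce hd hn0 Ms x _ T hlen _ p1 p2)
  rw [Real.rpow_one, ← hL]
  have q1 : Real.exp (-(3 * L)) = Real.exp (-L) * (Real.exp (-L) * Real.exp (-L)) := by
    rw [← Real.exp_add, ← Real.exp_add]; congr 1; ring
  have q2 : Real.exp (-L) ≤ 1 / 2 := by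
    rw [Real.exp_neg, hL, Real.exp_log hKn, ← one_div]
    exact one_div_le_one_div_of_le (by norm_num) (by nlinarith)
  have q3 : Real.exp (-L) ≤ Real.exp (-Real.log n) := Real.exp_le_exp.2 (by linarith)
  have q4 := Real.exp_pos (-L)
  have q5 : Real.exp (-L) * Real.exp (-L) ≤ 1 / 4 := by nlinarith
  have q6 := mul_le_mul_of_nonneg_left q5 q4.le
  rw [q1]
  linarith


/-- Main theorem for the balancing circuit model with a constant
number `d` of matchings on a regular graph:  there are constants `c, C, γ > 0`
(depending only on `d`) such that for all sufficiently large `n`, with probability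
at least `1 - e^{-(log n)^γ}` the discrepancy is at most `c` after
`⌈C log(Kn)/(1 - λ(M))⌉` rounds of the discrete process with independent uniformly
random orientations, started from any vector of discrepancy at most `K ≥ 2`. -/
theorem stmt18 (d : ℕ) (hd : 0 < d) :
    ∃ c C γ : ℝ, 0 < c ∧ 0 < C ∧ 0 < γ ∧
    ∃ N₀ : ℕ, ∀ n : ℕ, N₀ ≤ n →
    ∀ G : SimpleGraph (Fin n), (∃ r : ℕ, ∀ v, (G.neighborSet v).ncard = r) →
    ∀ Ms : Fin d → Matching n,
    (∀ i u, (Ms i).f u ≠ u → G.Adj u ((Ms i).f u)) →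
    lamMax (roundMatrix Ms) < 1 →
    ∀ K : ℝ, 2 ≤ K → ∀ x : Fin n → ℤ, discZ x ≤ K →
    ∀ T : ℕ, T = ⌈C * Real.log (K * n) / (1 - lamMax (roundMatrix Ms))⌉₊ →
    1 - Real.exp (-(Real.log n) ^ γ) ≤
      pr (fun ω : Fin T → Fin n → Fin n → Bool =>
        discZ (loads (circuit hd Ms) (lift (orientDefault n) ω) x T) ≤ c) := by
  obtain ⟨c, C, γ, hc, hC, hγ, N₀, h⟩ := core_thm d hd
  exact ⟨c, C, γ, hc, hC, hγ, N₀, fun n hn _ _ Ms _ hl K hK x hx T hT =>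
    h n hn Ms hl K hK x hx T hT⟩

end LB
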